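/- Let ρ : S² → S² be a continuous map of degree k ≥ 1. Then the set {p ∈ S² : the fiber ρ⁻¹(p) has fewer than k elements} is finite. -/

import Mathlib

open scoped Topology Topology.Homotopy unitInterval

noncomputable section

/-- The 2-sphere `S²`, as the unit sphere in Euclidean 3-space. -/
abbrev Sphere2 : Type := Metric.sphere (0 : EuclideanSpace ℝ (Fin 3)) 1

/-- The map induced by a continuous map `ρ` on second homotopy groups,
`π₂(X, b) → π₂(Y, ρ b)`, given by postcomposition. -/
noncomputable def piTwoMap {X Y : Type*} [TopologicalSpace X] [TopologicalSpace Y]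
    (ρ : C(X, Y)) (b : X) :
    HomotopyGroup (Fin 2) X b → HomotopyGroup (Fin 2) Y (ρ b) :=
  Quotient.map
    (fun p => ⟨ρ.comp p.1, fun y hy => by
      simp only [ContinuousMap.comp_apply]
      rw [p.2 y hy]⟩)
    (fun p q h => by
      obtain ⟨H⟩ := h
      exact ⟨H.compContinuousMap ρ⟩)

/-- A continuous self-map `ρ` of `S²` has degree `k` if the induced map on
`π₂(S²) ≅ H₂(S²; ℤ) ≅ ℤ` is multiplication by `k` (written multiplicatively,
`γ ↦ γ ^ k`). -/
def HasDegree (ρ : C(Sphere2, Sphere2)) (k : ℤ) : Prop :=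
  ∃ (b : Sphere2) (e : HomotopyGroup (Fin 2) Sphere2 b ≃* Multiplicative ℤ)
    (e' : HomotopyGroup (Fin 2) Sphere2 (ρ b) ≃* Multiplicative ℤ),
    ∀ γ : HomotopyGroup (Fin 2) Sphere2 b, e' (piTwoMap ρ b γ) = (e γ) ^ k

/-!
Let `P` be a set of `n` points of `S²`. Through the Hopf map, a loop in `π₂(S²)` is covered by a map
of the square to `ℂ² ∖ 0` that is constant on three sides and runs `d` times through a circle
fibre on the fourth, where `d` is the degree. Off the `n` complex lines over `P` there is a flat
`ℝ`-bundle whose holonomy consists of lifts of circle homeomorphisms, such that the holonomy around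
each line has a fixed point, while that of a circle fibre is the translation by `n - 2`.

Sweep the square by vertical paths. The parallel transport along such a path changes only when the
path crosses a preimage of `P`, and then by less than `1` because the holonomy around a line has a
fixed point. It ends up as a translation by `d * (n - 2)`, so `P` has at least `|d| * (n - 2)`
preimages. If all fibers over `P` had fewer than `k` elements, for a map of degree `k`, this would
give `k * (n - 2) ≤ n * (k - 1)`, hence `n ≤ 2 * k`.
-/

namespace SmallFibers

open Set Filter

theorem exists_injOn_fst_add_mul_snd {Q : Set (ℝ × ℝ)} (hQ : Q.Finite) :
    ∃ s ∈ Ioo (0 : ℝ) 1, InjOn (fun p : ℝ × ℝ => p.1 + s * p.2) Q := by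
  have hbad : ((fun p : (ℝ × ℝ) × ℝ × ℝ => (p.2.1 - p.1.1) / (p.1.2 - p.2.2)) '' Q ×ˢ Q).Finite :=
    (hQ.prod hQ).image _
  obtain ⟨s, hs, hgood⟩ := (Ioo_infinite zero_lt_one).exists_notMem_finite hbad
  refine ⟨s, hs, fun p hp p' hp' heq => ?_⟩
  by_cases hy : p.2 = p'.2
  · exact Prod.ext (by simpa [hy] using heq) hy
  · refine absurd ⟨(p, p'), ⟨hp, hp'⟩, ?_⟩ hgood
    rw [div_eq_iff (sub_ne_zero.2 hy)]
    linear_combination -heq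

/-! ### Lifts of circle homeomorphisms -/

section periodicPow

variable {p q : ℝ}

theorem fract_rpow_mem_Ico (hp : 0 < p) (t : ℝ) : Int.fract t ^ p ∈ Ico (0 : ℝ) 1 :=
  ⟨Real.rpow_nonneg (Int.fract_nonneg t) p,
    Real.rpow_lt_one (Int.fract_nonneg t) (Int.fract_lt_one t) hp⟩

theorem monotone_floor_add_fract_rpow (hp : 0 < p) :
    Monotone fun t : ℝ => ⌊t⌋ + Int.fract t ^ p := by
  intro s t hst
  rcases (Int.floor_mono hst).lt_or_eq with hlt | heq
  · have hfloor : (⌊s⌋ : ℝ) + 1 ≤ ⌊t⌋ := mod_cast hlt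
    linarith [(fract_rpow_mem_Ico hp s).2, (fract_rpow_mem_Ico hp t).1]
  · have hfract : Int.fract s ≤ Int.fract t := by
      rw [Int.fract, Int.fract, heq]
      gcongr
    simp only [heq]
    gcongr

/-- The lift of a circle homeomorphism that is given by `t ↦ t ^ p` on `[0, 1)`. -/
def periodicPow (hp : 0 < p) : CircleDeg1Lift where
  toFun t := ⌊t⌋ + Int.fract t ^ p
  monotone' := monotone_floor_add_fract_rpow hp
  map_add_one' t := by
    rw [Int.floor_add_one, Int.fract_add_one, Int.cast_add, Int.cast_one, add_right_comm]

theorem periodicPow_apply (hp : 0 < p) (t : ℝ) : periodicPow hp t = ⌊t⌋ + Int.fract t ^ p := rfl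

theorem periodicPow_of_mem_Ico (hp : 0 < p) {t : ℝ} (ht : t ∈ Ico (0 : ℝ) 1) :
    periodicPow hp t = t ^ p := by
  rw [periodicPow_apply, Int.floor_eq_zero_iff.2 ht, Int.fract_eq_self.2 ht, Int.cast_zero,
    zero_add]

theorem periodicPow_mul_periodicPow (hp : 0 < p) (hq : 0 < q) (hpq : p * q = 1) :
    periodicPow hq * periodicPow hp = 1 := by
  ext t
  have hmem := fract_rpow_mem_Ico hp t
  rw [CircleDeg1Lift.mul_apply, periodicPow_apply hp, CircleDeg1Lift.map_int_add,
    periodicPow_of_mem_Ico hq hmem, ← Real.rpow_mul (Int.fract_nonneg t), hpq, Real.rpow_one,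
    Int.floor_add_fract, CircleDeg1Lift.coe_one, id]

theorem exists_circleDeg1Lift_eq {x y : ℝ} (hx : x ∈ Ioo (0 : ℝ) 1) (hy : y ∈ Ioo (0 : ℝ) 1) :
    ∃ f : CircleDeg1Liftˣ, f 0 = 0 ∧ f x = y := by
  have hlogx := Real.log_neg hx.1 hx.2
  have hp : 0 < Real.log y / Real.log x := div_pos_of_neg_of_neg (Real.log_neg hy.1 hy.2) hlogx
  refine ⟨⟨periodicPow hp, periodicPow (inv_pos.2 hp),
    periodicPow_mul_periodicPow _ _ (inv_mul_cancel₀ hp.ne'),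
    periodicPow_mul_periodicPow _ _ (mul_inv_cancel₀ hp.ne')⟩, ?_, ?_⟩
  · rw [periodicPow_of_mem_Ico hp ⟨le_rfl, zero_lt_one⟩, Real.zero_rpow hp.ne']
  · rw [periodicPow_of_mem_Ico hp ⟨hx.1.le, hx.2⟩, Real.rpow_def_of_pos hx.1,
      mul_div_cancel₀ _ hlogx.ne, Real.exp_log hy.1]

end periodicPow

/-- Consecutive lifts in the sequence agree somewhere, so each step moves points by less than `1`;
nevertheless `m + 1` steps move the point `x` by `m`. -/
theorem exists_seq_circleDeg1Lift (m : ℕ) :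
    ∃ g : ℕ → CircleDeg1Liftˣ, g 0 = 1 ∧ (∀ j, ∃ s, g j s = g (j + 1) s) ∧
      ∃ x, g (m + 1) x = x + m := by
  set x : ℝ := 1 / (2 * (m + 1)) with hx
  set α : ℝ := 1 - 1 / (m + 1) with hα
  have hx0 : 0 < x := by positivity
  have hx1 : x ≤ 1 / 2 := by
    rw [hx]
    gcongr
    exact le_mul_of_one_le_right zero_le_two (by simp)
  obtain ⟨f, hf0, hfx⟩ := exists_circleDeg1Lift_eq (x := x) (y := 1 - x) ⟨hx0, by linarith⟩
    ⟨by linarith, by linarith⟩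
  set h : CircleDeg1Liftˣ := CircleDeg1Lift.translate (.ofAdd (-α)) * f
  have happly (t : ℝ) : h t = -α + f t := rfl
  refine ⟨fun j => CircleDeg1Lift.translate (.ofAdd (j * α)) * h ^ j, by simp, fun j => ?_, x, ?_⟩
  · refine ⟨(h ^ j)⁻¹ 0, ?_⟩
    have hzero : (h ^ (j + 1)) ((h ^ j)⁻¹ 0) = -α := by
      rw [pow_succ', Units.val_mul, CircleDeg1Lift.mul_apply,
        CircleDeg1Lift.units_apply_inv_apply, happly, hf0, add_zero]
    rw [Units.val_mul, Units.val_mul, CircleDeg1Lift.mul_apply, CircleDeg1Lift.mul_apply, hzero,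
      CircleDeg1Lift.units_apply_inv_apply, CircleDeg1Lift.translate_apply,
      CircleDeg1Lift.translate_apply]
    push_cast
    ring
  · have hfix : Function.IsFixedPt h x := by
      rw [Function.IsFixedPt, happly, hfx, hα, hx]
      field_simp
      ring
    rw [Units.val_mul, CircleDeg1Lift.mul_apply, Units.val_pow_eq_pow_val, CircleDeg1Lift.coe_pow,
      hfix.iterate, CircleDeg1Lift.translate_apply, hα]
    push_cast
    field_simp
    ring

/-! ### Branches of the argument -/

theorem eventually_eq_of_coe_angle_eq {A : Type*} {l : Filter A} {f : A → ℝ} {x : ℝ}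
    (hf : Tendsto f l (𝓝 x)) (hangle : ∀ᶠ a in l, (f a : Real.Angle) = x) :
    ∀ᶠ a in l, f a = x := by
  filter_upwards [hangle, hf (Metric.ball_mem_nhds x Real.two_pi_pos)] with a ha hball
  obtain ⟨n, hn⟩ := Real.Angle.angle_eq_iff_two_pi_dvd_sub.1 ha
  rw [mem_preimage, Metric.mem_ball, Real.dist_eq, hn, abs_mul, abs_of_pos Real.two_pi_pos,
    mul_lt_iff_lt_one_right Real.two_pi_pos] at hball
  have hn0 : n = 0 := Int.abs_lt_one_iff.1 (mod_cast hball)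
  rw [hn0, Int.cast_zero, mul_zero] at hn
  exact sub_eq_zero.1 hn

/-- The branch of the argument that is continuous off the ray opposite to `b₀`. -/
def argNear (b₀ b : ℂ) : ℝ := b₀.arg + (b / b₀).arg

theorem continuousAt_argNear {b₀ b : ℂ} (hb : b / b₀ ∈ Complex.slitPlane) :
    ContinuousAt (argNear b₀) b :=
  continuousAt_const.add
    ((Complex.continuousAt_arg hb).comp (f := fun b => b / b₀) (by fun_prop))

theorem coe_argNear {b₀ b : ℂ} (hb₀ : b₀ ≠ 0) (hb : b ≠ 0) :
    (argNear b₀ b : Real.Angle) = b.arg := by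
  rw [argNear, Real.Angle.coe_add, ← Complex.arg_mul_coe_angle hb₀ (div_ne_zero hb hb₀),
    mul_div_cancel₀ b hb₀]

theorem ne_zero_of_div_mem_slitPlane {b₀ b : ℂ} (hb : b / b₀ ∈ Complex.slitPlane) :
    b₀ ≠ 0 ∧ b ≠ 0 := by
  have hne := Complex.slitPlane_ne_zero hb
  exact ⟨fun h => hne (by rw [h, div_zero]), fun h => hne (by rw [h, zero_div])⟩

theorem div_self_mem_slitPlane {b : ℂ} (hb : b ≠ 0) : b / b ∈ Complex.slitPlane := by
  rw [div_self hb]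
  exact Complex.one_mem_slitPlane

/-- The number of turns from the principal argument of `b` to the argument `θ`. -/
def turns (θ : ℝ) (b : ℂ) : ℝ := (θ - b.arg) / (2 * Real.pi)

theorem turns_eq_intCast {θ : ℝ} {b : ℂ} (hθ : (θ : Real.Angle) = b.arg) :
    ∃ n : ℤ, turns θ b = n := by
  obtain ⟨n, hn⟩ := Real.Angle.angle_eq_iff_two_pi_dvd_sub.1 hθ
  exact ⟨n, by rw [turns, hn, mul_div_cancel_left₀ _ Real.two_pi_pos.ne']⟩

theorem turns_add_two_pi (θ : ℝ) (b : ℂ) : turns (θ + 2 * Real.pi) b = turns θ b + 1 := by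
  rw [turns, turns]
  field_simp
  ring

theorem eventually_turns_sub_turns_eq {A : Type*} [TopologicalSpace A] {S : Set A} {a : A}
    (ha : a ∈ S) {f : A → ℂ} {θ θ' : A → ℝ} (hθ : ContinuousWithinAt θ S a)
    (hθ' : ContinuousWithinAt θ' S a)
    (hangle : ∀ᶠ a' in 𝓝[S] a, (θ a' : Real.Angle) = (f a').arg)
    (hangle' : ∀ᶠ a' in 𝓝[S] a, (θ' a' : Real.Angle) = (f a').arg) :
    ∀ᶠ a' in 𝓝[S] a,
      turns (θ a') (f a') - turns (θ' a') (f a') = turns (θ a) (f a) - turns (θ' a) (f a) := by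
  have hzero : ∀ᶠ a' in 𝓝[S] a, ((θ a' - θ' a' : ℝ) : Real.Angle) = 0 := by
    filter_upwards [hangle, hangle'] with a' h h'
    rw [Real.Angle.coe_sub, h, h', sub_self]
  have hconst := eventually_eq_of_coe_angle_eq (hθ.sub hθ')
    (hzero.mono fun a' h => h.trans (hzero.self_of_nhdsWithin ha).symm)
  filter_upwards [hconst] with a' h
  simp only [Pi.sub_apply] at h
  simp only [turns]
  linear_combination h / (2 * Real.pi)

/-! ### Flat line bundles with circle holonomy -/

/-- A flat `ℝ`-bundle over the union of the sets `baseSet i`, with structure group the lifts of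
circle homeomorphisms. The bundle is encoded on the product `X × ℝ`: the fibre coordinate of `t`
over `x` in the chart `i` is `frame i x t`, and the coordinate changes are locally constant. -/
structure FlatAtlas (ι X : Type*) [TopologicalSpace X] where
  baseSet : ι → Set X
  isOpen_baseSet : ∀ i, IsOpen (baseSet i)
  frame : ι → X → CircleDeg1Liftˣ
  eventually_frame_mul_inv_eq : ∀ i j x, x ∈ baseSet i → x ∈ baseSet j →
    ∀ᶠ y in 𝓝 x, frame j y * (frame i y)⁻¹ = frame j x * (frame i x)⁻¹

namespace FlatAtlas

variable {ι X A B : Type*} [TopologicalSpace X] [TopologicalSpace A] [TopologicalSpace B]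
  (𝒜 : FlatAtlas ι X) {F : A → X} {c c' : A → ℝ} {S T : Set A} {a b : A}

/-- The section `c` of the flat bundle along the map `F` is parallel within `S` near `a`. -/
def IsFlatWithinAt (F : A → X) (c : A → ℝ) (S : Set A) (a : A) : Prop :=
  ContinuousWithinAt F S a ∧ ∃ i, F a ∈ 𝒜.baseSet i ∧
    ∀ᶠ a' in 𝓝[S] a, 𝒜.frame i (F a') (c a') = 𝒜.frame i (F a) (c a)

/-- The section `c` of the flat bundle along the map `F` is parallel on `S`. -/
def IsFlatOn (F : A → X) (c : A → ℝ) (S : Set A) : Prop :=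
  ∀ a ∈ S, 𝒜.IsFlatWithinAt F c S a

variable {𝒜}

theorem IsFlatWithinAt.eventually_frame_eq (h : 𝒜.IsFlatWithinAt F c S a) {j : ι}
    (hj : F a ∈ 𝒜.baseSet j) :
    ∀ᶠ a' in 𝓝[S] a, 𝒜.frame j (F a') (c a') = 𝒜.frame j (F a) (c a) := by
  obtain ⟨hF, i, hi, hflat⟩ := h
  filter_upwards [hflat, hF.eventually (𝒜.eventually_frame_mul_inv_eq i j (F a) hi hj)]
    with a' ha' hcoord
  have hchange (y : X) (t : ℝ) :
      (𝒜.frame j y * (𝒜.frame i y)⁻¹ : CircleDeg1Liftˣ) (𝒜.frame i y t) = 𝒜.frame j y t := by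
    rw [Units.val_mul, CircleDeg1Lift.mul_apply, CircleDeg1Lift.units_inv_apply_apply]
  rw [← hchange, hcoord, ha', hchange]

theorem IsFlatWithinAt.mono (h : 𝒜.IsFlatWithinAt F c T a) (hST : S ⊆ T) :
    𝒜.IsFlatWithinAt F c S a := by
  obtain ⟨hF, i, hi, hflat⟩ := h
  exact ⟨hF.mono hST, i, hi, hflat.filter_mono (nhdsWithin_mono a hST)⟩

theorem IsFlatWithinAt.congr_section (h : 𝒜.IsFlatWithinAt F c S a) (ha : a ∈ S)
    (hc : c' =ᶠ[𝓝[S] a] c) : 𝒜.IsFlatWithinAt F c' S a := by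
  obtain ⟨hF, i, hi, hflat⟩ := h
  refine ⟨hF, i, hi, ?_⟩
  filter_upwards [hflat, hc] with a' ha' hca'
  rw [hca', ha', hc.self_of_nhdsWithin ha]

theorem IsFlatOn.mono (h : 𝒜.IsFlatOn F c T) (hST : S ⊆ T) : 𝒜.IsFlatOn F c S :=
  fun a ha => (h a (hST ha)).mono hST

theorem IsFlatOn.comp {T : Set B} {φ : B → A} (h : 𝒜.IsFlatOn F c S) (hφ : ContinuousOn φ T)
    (hmaps : MapsTo φ T S) : 𝒜.IsFlatOn (F ∘ φ) (c ∘ φ) T := by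
  intro b hb
  obtain ⟨hF, i, hi, hflat⟩ := h (φ b) (hmaps hb)
  exact ⟨hF.comp (hφ b hb) hmaps, i, hi,
    ((hφ b hb).tendsto_nhdsWithin hmaps).eventually hflat⟩

theorem IsFlatOn.congr_map {F' : A → X} (h : 𝒜.IsFlatOn F c S) (hF : EqOn F' F S) :
    𝒜.IsFlatOn F' c S := by
  intro a ha
  obtain ⟨hcont, i, hi, hflat⟩ := h a ha
  refine ⟨hcont.congr hF (hF ha), i, by rwa [hF ha], ?_⟩
  filter_upwards [hflat, self_mem_nhdsWithin] with a' heq ha'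
  rw [hF ha, hF ha', heq]

theorem IsFlatOn.add_intCast (h : 𝒜.IsFlatOn F c S) (n : ℤ) :
    𝒜.IsFlatOn F (fun a => c a + n) S := by
  intro a ha
  obtain ⟨hF, i, hi, hflat⟩ := h a ha
  refine ⟨hF, i, hi, hflat.mono fun a' ha' => ?_⟩
  rw [CircleDeg1Lift.map_add_int, CircleDeg1Lift.map_add_int, ha']

theorem isFlatOn_const {x : X} {i : ι} (hx : x ∈ 𝒜.baseSet i) (t : ℝ) (S : Set A) :
    𝒜.IsFlatOn (fun _ => x) (fun _ => t) S :=
  fun _ _ => ⟨continuousWithinAt_const, i, hx, .of_forall fun _ => rfl⟩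

/-- Parallel sections along the same map do not cross, because the frames are increasing. -/
theorem IsFlatOn.lt_iff_lt (h : 𝒜.IsFlatOn F c S) (h' : 𝒜.IsFlatOn F c' S) (hS : IsPreconnected S)
    (ha : a ∈ S) (hb : b ∈ S) : c a < c' a ↔ c b < c' b := by
  refine hS.induction₂ (fun a b => c a < c' a ↔ c b < c' b) (fun a ha => ?_)
    (fun _ _ _ _ _ _ => Iff.trans) (fun _ _ _ _ => Iff.symm) ha hb
  obtain ⟨-, i, hi, hflat⟩ := h a ha
  filter_upwards [hflat, (h' a ha).eventually_frame_eq hi] with a' hc hc'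
  have hlt (y : X) (s t : ℝ) : 𝒜.frame i y s < 𝒜.frame i y t ↔ s < t :=
    (CircleDeg1Lift.toOrderIso (𝒜.frame i y)).lt_iff_lt
  rw [← hlt (F a), ← hc, ← hc', hlt]

theorem IsFlatOn.le_iff_le (h : 𝒜.IsFlatOn F c S) (h' : 𝒜.IsFlatOn F c' S) (hS : IsPreconnected S)
    (ha : a ∈ S) (hb : b ∈ S) : c a ≤ c' a ↔ c b ≤ c' b := by
  rw [← not_lt, ← not_lt, h'.lt_iff_lt h hS ha hb]

theorem IsFlatOn.eq_of_eq (h : 𝒜.IsFlatOn F c S) (h' : 𝒜.IsFlatOn F c' S) (hS : IsPreconnected S)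
    (ha : a ∈ S) (hb : b ∈ S) (heq : c a = c' a) : c b = c' b :=
  le_antisymm ((h.le_iff_le h' hS ha hb).1 heq.le) ((h'.le_iff_le h hS ha hb).1 heq.ge)

theorem IsFlatOn.eq_of_eqOn_const (h : 𝒜.IsFlatOn F c S) (hS : IsPreconnected S) {x : X}
    (hF : EqOn F (fun _ => x) S) (ha : a ∈ S) (hb : b ∈ S) : c a = c b := by
  obtain ⟨-, i, hi, -⟩ := h a ha
  have hconst : 𝒜.IsFlatOn F (fun _ => c a) S := fun b hb => by
    refine ⟨(h b hb).1, i, by rwa [hF hb, ← hF ha], ?_⟩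
    filter_upwards [self_mem_nhdsWithin] with b' hb'
    rw [hF hb, hF hb']
  exact hconst.eq_of_eq h hS ha hb rfl

theorem IsFlatOn.mem_Ico_iff (h : 𝒜.IsFlatOn F c S) (h' : 𝒜.IsFlatOn F c' S)
    (hS : IsPreconnected S) (ha : a ∈ S) (hb : b ∈ S) (n : ℤ) :
    c a ∈ Ico (c' a + n) (c' a + n + 1) ↔ c b ∈ Ico (c' b + n) (c' b + n + 1) := by
  have hlower := (h'.add_intCast n).le_iff_le h hS ha hb
  have hupper := h.lt_iff_lt ((h'.add_intCast n).add_intCast 1) hS ha hb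
  rw [Int.cast_one] at hupper
  exact and_congr hlower hupper

theorem IsFlatOn.exists_forall_mem_Ico (h : 𝒜.IsFlatOn F c S) (h' : 𝒜.IsFlatOn F c' S)
    (hS : IsPreconnected S) : ∃ n : ℤ, ∀ a ∈ S, c a ∈ Ico (c' a + n) (c' a + n + 1) := by
  rcases S.eq_empty_or_nonempty with rfl | ⟨a, ha⟩
  · exact ⟨0, by simp⟩
  · refine ⟨⌊c a - c' a⌋, fun b hb => (h.mem_Ico_iff h' hS ha hb _).1 ⟨?_, ?_⟩⟩
    · linarith [Int.floor_le (c a - c' a)]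
    · linarith [Int.lt_floor_add_one (c a - c' a)]

/-! ### Homotopy lifting -/

/-- The set of real numbers with the discrete topology, the fibre of the covering space underlying
a `FlatAtlas`. -/
structure DiscreteReal where
  toReal : ℝ

instance : TopologicalSpace DiscreteReal := ⊥

instance : DiscreteTopology DiscreteReal := ⟨rfl⟩

variable (𝒜)

/-- The base of the flat bundle. -/
def domain : Set X := ⋃ i, 𝒜.baseSet i

/-- The flat bundle as a bundle with discrete fibre, that is, as a covering space. -/
def bundleCore : FiberBundleCore ι 𝒜.domain DiscreteReal where
  baseSet i := {x | x.1 ∈ 𝒜.baseSet i}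
  isOpen_baseSet i := (𝒜.isOpen_baseSet i).preimage continuous_subtype_val
  indexAt x := (mem_iUnion.1 x.2).choose
  mem_baseSet_at x := (mem_iUnion.1 x.2).choose_spec
  coordChange i j x t := ⟨(𝒜.frame j x * (𝒜.frame i x)⁻¹ : CircleDeg1Liftˣ) t.toReal⟩
  coordChange_self i x _ t := by rw [mul_inv_cancel, Units.val_one, CircleDeg1Lift.coe_one, id]
  continuousOn_coordChange i j := by
    rintro ⟨x, t⟩ ⟨hx, -⟩
    have hcoord : ∀ᶠ y : 𝒜.domain in 𝓝 x,
        𝒜.frame j y * (𝒜.frame i y)⁻¹ = 𝒜.frame j x * (𝒜.frame i x)⁻¹ :=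
      continuous_subtype_val.continuousAt.eventually
        (𝒜.eventually_frame_mul_inv_eq i j x hx.1 hx.2)
    have hconst : ∀ᶠ p : 𝒜.domain × DiscreteReal in 𝓝 (x, t),
        (⟨(𝒜.frame j p.1 * (𝒜.frame i p.1)⁻¹ : CircleDeg1Liftˣ) p.2.toReal⟩ : DiscreteReal) =
          ⟨(𝒜.frame j x * (𝒜.frame i x)⁻¹ : CircleDeg1Liftˣ) t.toReal⟩ := by
      rw [nhds_prod_eq, nhds_discrete DiscreteReal, prod_pure, eventually_map]
      filter_upwards [hcoord] with y hy
      rw [hy]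
    exact (continuousAt_const.congr (hconst.mono fun _ => Eq.symm)).continuousWithinAt
  coordChange_comp i j k x _ t := by
    rw [← CircleDeg1Lift.mul_apply, ← Units.val_mul, mul_assoc, inv_mul_cancel_left]

/-- The section of the covering space `𝒜.bundleCore` along `F` defined by `c`. -/
def toTotalSpace {Y : Type*} (F : Y → 𝒜.domain) (c : Y → ℝ) (a : Y) : 𝒜.bundleCore.TotalSpace :=
  ⟨F a, ⟨𝒜.frame (𝒜.bundleCore.indexAt (F a)) (F a) (c a)⟩⟩

/-- The inverse of `toTotalSpace`. -/
def height (e : 𝒜.bundleCore.TotalSpace) : ℝ :=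
  (𝒜.frame (𝒜.bundleCore.indexAt e.proj) e.proj)⁻¹ (DiscreteReal.toReal e.2)

theorem height_toTotalSpace {Y : Type*} (F : Y → 𝒜.domain) (c : Y → ℝ) (a : Y) :
    𝒜.height (𝒜.toTotalSpace F c a) = c a :=
  CircleDeg1Lift.units_inv_apply_apply _ _

theorem toTotalSpace_height {Y : Type*} (e : Y → 𝒜.bundleCore.TotalSpace) :
    𝒜.toTotalSpace (fun a => (e a).proj) (fun a => 𝒜.height (e a)) = e := by
  funext a
  simp only [toTotalSpace, height, CircleDeg1Lift.units_apply_inv_apply]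
  rfl

variable {𝒜}

theorem trivializationAt_toTotalSpace {Y : Type*} (F : Y → 𝒜.domain) (c : Y → ℝ) (a a' : Y) :
    (trivializationAt DiscreteReal 𝒜.bundleCore.Fiber (F a) (𝒜.toTotalSpace F c a')).2 =
      ⟨𝒜.frame (𝒜.bundleCore.indexAt (F a)) (F a') (c a')⟩ := by
  change (⟨_⟩ : DiscreteReal) = _
  congr 1
  change (𝒜.frame _ _ * (𝒜.frame _ _)⁻¹ : CircleDeg1Liftˣ) (𝒜.frame _ _ (c a')) = _
  exact congrArg _ (CircleDeg1Lift.units_inv_apply_apply _ _)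

theorem continuous_toTotalSpace_iff {F : A → 𝒜.domain} (hF : Continuous F) :
    Continuous (𝒜.toTotalSpace F c) ↔ 𝒜.IsFlatOn (fun a => (F a : X)) c univ := by
  simp only [continuous_iff_continuousAt, IsFlatOn, mem_univ, true_implies]
  refine forall_congr' fun a => ?_
  have hindex := 𝒜.bundleCore.mem_baseSet_at (F a)
  rw [FiberBundle.continuousAt_totalSpace]
  change ContinuousAt F a ∧ ContinuousAt (fun a' =>
    (trivializationAt DiscreteReal 𝒜.bundleCore.Fiber (F a) (𝒜.toTotalSpace F c a')).2) a ↔ _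
  simp only [trivializationAt_toTotalSpace, ContinuousAt, nhds_discrete, tendsto_pure,
    DiscreteReal.mk.injEq]
  refine ⟨fun h => ?_, fun h => ⟨hF.continuousAt, ?_⟩⟩
  · exact ⟨(continuous_subtype_val.comp hF).continuousWithinAt, _, hindex,
      by rw [nhdsWithin_univ]; exact h.2⟩
  · simpa only [nhdsWithin_univ] using h.eventually_frame_eq hindex

theorem exists_isFlatOn_homotopy {H : I × A → X} (hH : Continuous H)
    (hdomain : ∀ p, H p ∈ 𝒜.domain) {c₀ : A → ℝ}
    (hc₀ : 𝒜.IsFlatOn (fun a => H (0, a)) c₀ univ) :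
    ∃ c : I × A → ℝ, 𝒜.IsFlatOn H c univ ∧ ∀ a, c (0, a) = c₀ a := by
  have hcov : IsCoveringMap (Bundle.TotalSpace.proj : 𝒜.bundleCore.TotalSpace → 𝒜.domain) :=
    FiberBundle.isCoveringMap
  let K : C(I × A, 𝒜.domain) := ⟨fun p => ⟨H p, hdomain p⟩, by fun_prop⟩
  have hK₀ : Continuous fun a => K (0, a) := by fun_prop
  let e₀ : C(A, 𝒜.bundleCore.TotalSpace) :=
    ⟨𝒜.toTotalSpace (fun a => K (0, a)) c₀, (continuous_toTotalSpace_iff hK₀).2 hc₀⟩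
  let e := hcov.liftHomotopy K e₀ fun _ => rfl
  have hproj : (fun p => (e p).proj) = K := hcov.liftHomotopy_lifts K e₀ fun _ => rfl
  have hzero (a : A) : e (0, a) = e₀ a := hcov.liftHomotopy_zero K e₀ (fun _ => rfl) a
  refine ⟨fun p => 𝒜.height (e p), (continuous_toTotalSpace_iff K.continuous).1 ?_, fun a => ?_⟩
  · rw [← hproj, toTotalSpace_height]
    exact e.continuous
  · exact (congrArg 𝒜.height (hzero a)).trans (𝒜.height_toTotalSpace _ c₀ a)

theorem isFlatOn_of_restrict (h : 𝒜.IsFlatOn (S.domRestrict F) (S.domRestrict c) univ) :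
    𝒜.IsFlatOn F c S := by
  intro a ha
  obtain ⟨hF, i, hi, hflat⟩ := h ⟨a, ha⟩ (mem_univ _)
  refine ⟨continuousWithinAt_iff_continuousAt_domRestrict F ha |>.2
    (continuousWithinAt_univ _ _ |>.1 hF), i, hi, ?_⟩
  rw [nhdsWithin_univ] at hflat
  rwa [nhdsWithin_eq_map_subtype_coe ha, eventually_map]

theorem exists_isFlatOn_univ_prod {H : I × A → X} (hH : ContinuousOn H (univ ×ˢ S))
    (hdomain : ∀ t, ∀ a ∈ S, H (t, a) ∈ 𝒜.domain) {c₀ : A → ℝ}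
    (hc₀ : 𝒜.IsFlatOn (fun a => H (0, a)) c₀ S) :
    ∃ c : I × A → ℝ, 𝒜.IsFlatOn H c (univ ×ˢ S) ∧ ∀ a ∈ S, c (0, a) = c₀ a := by
  classical
  have hHS : Continuous fun p : I × S => H (p.1, p.2) :=
    hH.comp_continuous (by fun_prop) fun p => ⟨mem_univ _, p.2.2⟩
  obtain ⟨c, hc, hc_zero⟩ := 𝒜.exists_isFlatOn_homotopy hHS (fun p => hdomain p.1 p.2 p.2.2)
    (hc₀.comp continuous_subtype_val.continuousOn fun a _ => a.2)
  refine ⟨fun p => if hp : p.2 ∈ S then c (p.1, ⟨p.2, hp⟩) else 0, isFlatOn_of_restrict ?_,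
    fun a ha => by simp [ha, hc_zero]⟩
  let φ : (univ ×ˢ S : Set (I × A)) → I × S := fun p => (p.1.1, ⟨p.1.2, p.2.2⟩)
  have hext : (univ ×ˢ S).domRestrict
      (fun p => if hp : p.2 ∈ S then c (p.1, ⟨p.2, hp⟩) else 0) = c ∘ φ :=
    funext fun p => dif_pos p.2.2
  rw [hext]
  exact hc.comp (φ := φ) (by fun_prop) (mapsTo_univ _ univ)

end FlatAtlas

/-! ### Sweeping a strip across punctures -/

/-- A map `V` of the plane that is constant outside the strip `0 < y < 1` and takes values in the
base of a flat bundle off a finite set `Q` of punctures in the strip, such that the bundle has a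
parallel section around each puncture. -/
structure IsPuncturedStrip {ι X : Type*} [TopologicalSpace X] (𝒜 : FlatAtlas ι X)
    (V : ℝ × ℝ → X) (w : X) (Q : Finset (ℝ × ℝ)) : Prop where
  continuous : Continuous V
  eq_of_notMem_Ioo : ∀ p : ℝ × ℝ, p.2 ∉ Ioo (0 : ℝ) 1 → V p = w
  snd_mem_Ioo : ∀ q ∈ Q, q.2 ∈ Ioo (0 : ℝ) 1
  mem_domain : ∀ p ∉ Q, V p ∈ 𝒜.domain
  exists_isFlatOn_puncture : ∀ q ∈ Q, ∃ W ∈ 𝓝 q, ∃ κ, 𝒜.IsFlatOn V κ (W \ {q})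

/-- The plane cut along the vertical half-lines going up from the points of `Q`. -/
def cutPlane (Q : Finset (ℝ × ℝ)) : Set (ℝ × ℝ) := {p | ∀ q ∈ Q, q.1 = p.1 → p.2 < q.2}

theorem isPreconnected_ball_inter_slit (q : ℝ × ℝ) {ε : ℝ} (hε : 0 < ε) :
    IsPreconnected (Metric.ball q ε ∩ {p | q.1 = p.1 → p.2 < q.2}) := by
  have hcenter : (q.1, q.2 - ε / 2) ∈ Metric.ball q ε := by
    rw [← ball_prod_same]
    exact ⟨Metric.mem_ball_self hε, by simp [abs_of_pos hε, hε]⟩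
  have hslit : StarConvex ℝ (q.1, q.2 - ε / 2) {p : ℝ × ℝ | q.1 = p.1 → p.2 < q.2} := by
    intro p hp s t hs ht hst heq
    simp only [Prod.fst_add, Prod.smul_fst, Prod.snd_add, Prod.smul_snd, smul_eq_mul] at heq ⊢
    obtain rfl : s = 1 - t := by linarith
    rcases ht.eq_or_lt with rfl | ht
    · linarith
    · have hfst : q.1 = p.1 := mul_left_cancel₀ ht.ne' (by linarith)
      nlinarith [mul_lt_mul_of_pos_left (hp hfst) ht, mul_nonneg hs hε.le]
  refine ((((convex_ball q ε).starConvex hcenter).inter hslit).isPathConnected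
    ⟨hcenter, fun _ => ?_⟩).isConnected.isPreconnected
  simpa using hε

namespace IsPuncturedStrip

variable {ι X : Type*} [TopologicalSpace X] {𝒜 : FlatAtlas ι X} {V : ℝ × ℝ → X} {w : X}
  {Q : Finset (ℝ × ℝ)} {c : ℝ × ℝ → ℝ} {q : ℝ × ℝ}

theorem base_mem_domain (h : IsPuncturedStrip 𝒜 V w Q) : w ∈ 𝒜.domain := by
  rw [← h.eq_of_notMem_Ioo (0, 0) (by simp)]
  exact h.mem_domain _ fun h0 => by simpa using h.snd_mem_Ioo _ h0

theorem exists_isFlatOn_cutPlane (h : IsPuncturedStrip 𝒜 V w Q) (t₀ : ℝ) :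
    ∃ c, 𝒜.IsFlatOn V c (cutPlane Q) ∧ ∀ p ∈ cutPlane Q, p.2 = 0 → c p = t₀ := by
  obtain ⟨i, hi⟩ := mem_iUnion.1 h.base_mem_domain
  let H : I × (ℝ × ℝ) → X := fun p => V (p.2.1, p.1 * p.2.2)
  have hH : Continuous H := h.continuous.comp (by fun_prop)
  have hdomain (t : I) (p : ℝ × ℝ) (hp : p ∈ cutPlane Q) : H (t, p) ∈ 𝒜.domain := by
    refine h.mem_domain _ fun hmem => ?_
    have hpos := (h.snd_mem_Ioo _ hmem).1
    have hlt := hp _ hmem rfl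
    rcases le_or_gt p.2 0 with hy | hy
    · nlinarith [t.2.1]
    · nlinarith [t.2.2]
  have hzero : (fun p => H (0, p)) = fun _ => w :=
    funext fun p => h.eq_of_notMem_Ioo _ (by simp)
  obtain ⟨c, hc, hc₀⟩ := FlatAtlas.exists_isFlatOn_univ_prod hH.continuousOn hdomain
    (c₀ := fun _ => t₀) (by rw [hzero]; exact FlatAtlas.isFlatOn_const hi t₀ _)
  refine ⟨fun p => c (1, p), ?_, fun p hp hp₀ => ?_⟩
  · have hone : V = H ∘ fun p => (1, p) := by simp [H, Function.comp_def]
    rw [hone]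
    exact hc.comp (by fun_prop) fun p hp => ⟨mem_univ _, hp⟩
  · have hvert := hc.comp (T := univ) (φ := fun t => (t, p)) (by fun_prop)
      (fun t _ => ⟨mem_univ _, hp⟩)
    rw [← hc₀ p hp]
    exact hvert.eq_of_eqOn_const isPreconnected_univ (x := w)
      (fun t _ => h.eq_of_notMem_Ioo _ (by simp [hp₀])) (mem_univ 1) (mem_univ 0)

theorem top_eq_top (h : IsPuncturedStrip 𝒜 V w Q) (hc : 𝒜.IsFlatOn V c (cutPlane Q)) {u v : ℝ}
    (huv : u ≤ v) (hQ : ∀ q ∈ Q, q.1 ∉ Icc u v) : c (u, 1) = c (v, 1) := by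
  have htop := hc.comp (T := Icc u v) (φ := fun x => (x, 1)) (by fun_prop)
    (fun x hx q hq heq => absurd (heq ▸ hx) (hQ q hq))
  exact htop.eq_of_eqOn_const isPreconnected_Icc (x := w)
    (fun x _ => h.eq_of_notMem_Ioo _ (by simp)) (left_mem_Icc.2 huv) (right_mem_Icc.2 huv)

/-- The section around a puncture is continued upwards to the line `y = 1`. -/
theorem exists_top_mem_Ico (h : IsPuncturedStrip 𝒜 V w Q) (hc : 𝒜.IsFlatOn V c (cutPlane Q))
    {κ : ℝ × ℝ → ℝ} {u v y : ℝ} (hq : q.2 < 1) (hy : q.2 < y)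
    (hκ : 𝒜.IsFlatOn V κ (Icc u v ×ˢ {y})) (hQ : ∀ q' ∈ Q, q'.1 ∈ Icc u v → q' = q) :
    ∃ e : ℝ, ∀ x ∈ Icc u v, x ≠ q.1 → ∀ n : ℤ,
      c (x, y) ∈ Ico (κ (x, y) + n) (κ (x, y) + n + 1) → c (x, 1) ∈ Ico (e + n) (e + n + 1) := by
  let φ : I × ℝ → ℝ × ℝ := fun p => (p.2, y + p.1 * (1 - y))
  have hφ : Continuous φ := by fun_prop
  have habove (t : I) : q.2 < y + t * (1 - y) := by
    rcases le_total y 1 with hy1 | hy1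
    · nlinarith [t.2.1]
    · nlinarith [t.2.2]
  have hdomain (t : I) (x : ℝ) (hx : x ∈ Icc u v) : V (φ (t, x)) ∈ 𝒜.domain :=
    h.mem_domain _ fun hmem => (habove t).ne' (congrArg Prod.snd (hQ _ hmem hx))
  have hcut (t : I) (x : ℝ) (hx : x ∈ Icc u v) (hxq : x ≠ q.1) : φ (t, x) ∈ cutPlane Q :=
    fun q' hq' heq => absurd (by rw [← hQ q' hq' (heq ▸ hx), heq]) hxq
  have hbottom : 𝒜.IsFlatOn (fun x => V (φ (0, x))) (fun x => κ (φ (0, x))) (Icc u v) :=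
    hκ.comp (by fun_prop) fun x hx => ⟨hx, by simp [φ]⟩
  obtain ⟨e, he, he₀⟩ :=
    FlatAtlas.exists_isFlatOn_univ_prod (h.continuous.comp hφ).continuousOn hdomain hbottom
  have htop := he.comp (T := Icc u v) (φ := fun x => (1, x)) (by fun_prop)
    fun x hx => ⟨mem_univ _, hx⟩
  refine ⟨e (1, u), fun x hx hxq n hmem => ?_⟩
  have hu : u ∈ Icc u v := left_mem_Icc.2 (hx.1.trans hx.2)
  have heq : e (1, u) = e (1, x) := htop.eq_of_eqOn_const isPreconnected_Icc (x := w)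
    (fun x _ => h.eq_of_notMem_Ioo _ (by simp [φ])) hu hx
  have hc_vert := hc.comp (T := univ) (φ := fun t => φ (t, x)) (by fun_prop)
    fun t _ => hcut t x hx hxq
  have he_vert := he.comp (T := univ) (φ := fun t => (t, x)) (by fun_prop)
    fun t _ => ⟨mem_univ _, hx⟩
  have hiff := hc_vert.mem_Ico_iff he_vert isPreconnected_univ (mem_univ 0) (mem_univ 1) n
  simp only [Function.comp_apply, he₀ x hx, ← heq, φ] at hiff
  simpa using hiff.1 (by simpa using hmem)

/-- Next to the cut, the sections from the cut plane and around the puncture are compared along a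
path passing below the puncture. -/
theorem abs_top_sub_top_lt_one (h : IsPuncturedStrip 𝒜 V w Q)
    (hc : 𝒜.IsFlatOn V c (cutPlane Q)) (hq : q ∈ Q) {κ : ℝ × ℝ → ℝ} {ε δ : ℝ}
    (hκ : 𝒜.IsFlatOn V κ (Metric.ball q ε \ {q})) (hQ : ∀ q' ∈ Q, |q'.1 - q.1| < ε → q' = q)
    (hδ : 0 < δ) (hδε : δ < ε) : |c (q.1 + δ, 1) - c (q.1 - δ, 1)| < 1 := by
  have hball (x y : ℝ) : (x, y) ∈ Metric.ball q ε ↔ |x - q.1| < ε ∧ |y - q.2| < ε := by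
    simp [Prod.dist_eq, Real.dist_eq]
  have hIcc (x : ℝ) (hx : x ∈ Icc (q.1 - δ) (q.1 + δ)) : |x - q.1| < ε :=
    abs_lt.2 ⟨by linarith [hx.1], by linarith [hx.2]⟩
  have hy : |q.2 + ε / 2 - q.2| < ε := abs_lt.2 ⟨by linarith, by linarith⟩
  let S := Metric.ball q ε ∩ {p | q.1 = p.1 → p.2 < q.2}
  have hScut : S ⊆ cutPlane Q := fun p hp q' hq' heq => by
    obtain rfl := hQ q' hq' (heq ▸ ((hball p.1 p.2).1 hp.1).1)
    exact hp.2 heq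
  have hSball : S ⊆ Metric.ball q ε \ {q} := by
    refine fun p hp => ⟨hp.1, fun heq => ?_⟩
    rw [mem_singleton_iff.1 heq] at hp
    exact lt_irrefl _ (hp.2 rfl)
  obtain ⟨n, hn⟩ := (hc.mono hScut).exists_forall_mem_Ico (hκ.mono hSball)
    (isPreconnected_ball_inter_slit q (hδ.trans hδε))
  have hline : Icc (q.1 - δ) (q.1 + δ) ×ˢ {q.2 + ε / 2} ⊆ Metric.ball q ε \ {q} := by
    rintro ⟨x, y⟩ ⟨hx, rfl⟩
    refine ⟨(hball _ _).2 ⟨hIcc x hx, hy⟩, fun heq => ?_⟩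
    linarith [congrArg Prod.snd (mem_singleton_iff.1 heq)]
  obtain ⟨e, he⟩ := h.exists_top_mem_Ico hc (h.snd_mem_Ioo q hq).2 (by linarith)
    (hκ.mono hline) fun q' hq' hx => hQ q' hq' (hIcc _ hx)
  have htop (x : ℝ) (hx : x ∈ Icc (q.1 - δ) (q.1 + δ)) (hxq : x ≠ q.1) :
      c (x, 1) ∈ Ico (e + n) (e + n + 1) :=
    he x hx hxq n (hn _ ⟨(hball _ _).2 ⟨hIcc x hx, hy⟩, fun heq => absurd heq.symm hxq⟩)
  have hleft := htop (q.1 - δ) ⟨by linarith, by linarith⟩ (by linarith)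
  have hright := htop (q.1 + δ) ⟨by linarith, by linarith⟩ (by linarith)
  exact abs_lt.2 ⟨by linarith [hright.1, hleft.2], by linarith [hright.2, hleft.1]⟩

theorem eventually_abs_top_sub_top_lt_one (h : IsPuncturedStrip 𝒜 V w Q)
    (hinj : InjOn Prod.fst (Q : Set (ℝ × ℝ))) (hc : 𝒜.IsFlatOn V c (cutPlane Q)) (hq : q ∈ Q) :
    ∀ᶠ δ in 𝓝[>] 0, |c (q.1 + δ, 1) - c (q.1 - δ, 1)| < 1 := by
  obtain ⟨W, hW, κ, hκ⟩ := h.exists_isFlatOn_puncture q hq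
  obtain ⟨r, hr, hrW⟩ := Metric.mem_nhds_iff.1 hW
  have hsep : ∀ᶠ ε in 𝓝[>] (0 : ℝ), ∀ q' ∈ Q, |q'.1 - q.1| < ε → q' = q := by
    refine (Finset.eventually_all Q).2 fun q' hq' => ?_
    by_cases heq : q' = q
    · exact .of_forall fun _ _ => heq
    · have hpos : 0 < |q'.1 - q.1| := abs_pos.2 (sub_ne_zero.2 fun h => heq (hinj hq' hq h))
      filter_upwards [Ioo_mem_nhdsGT hpos] with ε hε hlt
      exact absurd hlt hε.2.le.not_gt
  obtain ⟨ε, ⟨hε, hεr⟩, hεQ⟩ := (Eventually.and (Ioo_mem_nhdsGT hr) hsep).exists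
  filter_upwards [Ioo_mem_nhdsGT hε] with δ hδ
  have hball := (Metric.ball_subset_ball hεr.le).trans hrW
  exact h.abs_top_sub_top_lt_one hc hq (hκ.mono (sdiff_subset_sdiff_left hball)) hεQ hδ.1 hδ.2

end IsPuncturedStrip

theorem abs_sub_le_card_of_eventually_jump {f : ℝ → ℝ} {X : Finset ℝ} {u v : ℝ} (huv : u ≤ v)
    (hmem : ∀ x ∈ X, x ∈ Ioo u v)
    (hconst : ∀ a b, u ≤ a → a ≤ b → b ≤ v → (∀ x ∈ X, x ∉ Icc a b) → f a = f b)
    (hjump : ∀ x ∈ X, ∀ᶠ δ in 𝓝[>] (0 : ℝ), |f (x + δ) - f (x - δ)| ≤ 1) :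
    |f v - f u| ≤ X.card := by
  induction X using Finset.induction_on_max generalizing v with
  | empty => simp [hconst u v le_rfl huv le_rfl (by simp)]
  | insert x X hmax ih =>
    have hx : x ∈ Ioo u v := hmem x (Finset.mem_insert_self x X)
    have hbelow : ∀ᶠ δ in 𝓝[>] (0 : ℝ), ∀ y ∈ X, y < x - δ :=
      (Finset.eventually_all X).2 fun y hy => by
        filter_upwards [Ioo_mem_nhdsGT (sub_pos.2 (hmax y hy))] with δ hδ
        linarith [hδ.2]
    obtain ⟨δ, ⟨hδ, hδv⟩, ⟨-, hδu⟩, hδX, hδf⟩ :=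
      (Eventually.and (Ioo_mem_nhdsGT (sub_pos.2 hx.2)) <|
        Eventually.and (Ioo_mem_nhdsGT (sub_pos.2 hx.1)) <|
        hbelow.and (hjump x (Finset.mem_insert_self x X))).exists
    have hleft : |f (x - δ) - f u| ≤ X.card := by
      refine ih (by linarith) (fun y hy => ⟨(hmem y (Finset.mem_insert_of_mem hy)).1, hδX y hy⟩)
        (fun a b ha hab hb hX => hconst a b ha hab (by linarith) ?_)
        fun y hy => hjump y (Finset.mem_insert_of_mem hy)
      refine Finset.forall_mem_insert .. |>.2 ⟨fun hxab => ?_, hX⟩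
      linarith [hxab.2]
    have hright : f (x + δ) = f v := by
      refine hconst _ _ (by linarith [hx.1]) (by linarith) le_rfl ?_
      refine Finset.forall_mem_insert .. |>.2 ⟨fun hxab => ?_, fun y hy hyab => ?_⟩
      · linarith [hxab.1]
      · linarith [hyab.1, hmax y hy]
    rw [Finset.card_insert_of_notMem fun h => lt_irrefl x (hmax x h), Nat.cast_add_one]
    calc |f v - f u| = |(f (x - δ) - f u) + (f (x + δ) - f (x - δ))| := by rw [hright]; ring_nf
      _ ≤ |f (x - δ) - f u| + |f (x + δ) - f (x - δ)| := abs_add_le _ _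
      _ ≤ X.card + 1 := add_le_add hleft hδf

/-- The shear `(x, y) ↦ (x - s * y, y)` of the plane. -/
def shear (s : ℝ) : ℝ × ℝ ≃ₜ ℝ × ℝ where
  toFun p := (p.1 - s * p.2, p.2)
  invFun p := (p.1 + s * p.2, p.2)
  left_inv p := by simp
  right_inv p := by simp

theorem injOn_fst_image_shear_symm {Q : Finset (ℝ × ℝ)} {s : ℝ}
    (hs : InjOn (fun p : ℝ × ℝ => p.1 + s * p.2) Q) :
    InjOn Prod.fst (Q.image (shear s).symm : Set (ℝ × ℝ)) := by
  rw [Finset.coe_image]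
  rintro _ ⟨p, hp, rfl⟩ _ ⟨q, hq, rfl⟩ heq
  rw [hs hp hq heq]

namespace IsPuncturedStrip

variable {ι X : Type*} [TopologicalSpace X] {𝒜 : FlatAtlas ι X} {V : ℝ × ℝ → X} {w : X}
  {Q : Finset (ℝ × ℝ)} {c : ℝ × ℝ → ℝ} {u v : ℝ}

theorem comp_homeomorph (h : IsPuncturedStrip 𝒜 V w Q) (Φ : ℝ × ℝ ≃ₜ ℝ × ℝ)
    (hΦ : ∀ p, (Φ p).2 = p.2) : IsPuncturedStrip 𝒜 (V ∘ Φ) w (Q.image Φ.symm) where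
  continuous := h.continuous.comp Φ.continuous
  eq_of_notMem_Ioo p hp := h.eq_of_notMem_Ioo _ (by rwa [hΦ])
  snd_mem_Ioo := by
    refine Finset.forall_mem_image.2 fun q hq => ?_
    rw [← hΦ, Φ.apply_symm_apply]
    exact h.snd_mem_Ioo q hq
  mem_domain p hp := h.mem_domain _ fun hmem =>
    hp (Finset.mem_image.2 ⟨Φ p, hmem, Φ.symm_apply_apply p⟩)
  exists_isFlatOn_puncture := by
    refine Finset.forall_mem_image.2 fun q hq => ?_
    obtain ⟨W, hW, κ, hκ⟩ := h.exists_isFlatOn_puncture q hq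
    refine ⟨Φ ⁻¹' W, Φ.continuous.continuousAt.preimage_mem_nhds (by simpa using hW), κ ∘ Φ,
      hκ.comp Φ.continuous.continuousOn fun p hp => ⟨hp.1, fun heq => hp.2 ?_⟩⟩
    exact Φ.eq_symm_apply.2 heq

theorem abs_top_sub_top_le_card (h : IsPuncturedStrip 𝒜 V w Q)
    (hinj : InjOn Prod.fst (Q : Set (ℝ × ℝ))) (hc : 𝒜.IsFlatOn V c (cutPlane Q)) (huv : u ≤ v)
    (hQ : ∀ q ∈ Q, q.1 ∈ Ioo u v) : |c (v, 1) - c (u, 1)| ≤ Q.card := by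
  have hcount : |c (v, 1) - c (u, 1)| ≤ (Q.image Prod.fst).card := by
    refine abs_sub_le_card_of_eventually_jump (f := fun x => c (x, 1)) huv
      (Finset.forall_mem_image.2 hQ)
      (fun a b _ hab _ hX => h.top_eq_top hc hab fun q hq =>
        hX q.1 (Finset.mem_image_of_mem _ hq))
      (Finset.forall_mem_image.2 fun q hq => ?_)
    exact (h.eventually_abs_top_sub_top_lt_one hinj hc hq).mono fun _ => le_of_lt
  exact hcount.trans (Nat.cast_le.2 Finset.card_image_le)

theorem abs_sub_le_card (h : IsPuncturedStrip 𝒜 V w Q) (huv : u ≤ v)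
    (hQ : ∀ q ∈ Q, q.1 ∈ Ioo u v) (hleft : ∀ p : ℝ × ℝ, p.1 ≤ u → V p = w)
    (hright : ∀ p : ℝ × ℝ, v ≤ p.1 → V p = V (v, p.2)) {c : ℝ → ℝ}
    (hc : 𝒜.IsFlatOn (fun y => V (v, y)) c (Icc 0 1)) : |c 1 - c 0| ≤ Q.card := by
  obtain ⟨s, ⟨hs₀, hs₁⟩, hs⟩ := exists_injOn_fst_add_mul_snd Q.finite_toSet
  have h' := h.comp_homeomorph (shear s) fun _ => rfl
  have hQ' : ∀ q ∈ Q.image (shear s).symm, q.1 ∈ Ioo u (v + 1) := by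
    refine Finset.forall_mem_image.2 fun q hq => ?_
    change q.1 + s * q.2 ∈ Ioo u (v + 1)
    have hq₁ := hQ q hq
    have hq₂ := h.snd_mem_Ioo q hq
    constructor <;> nlinarith [hq₁.1, hq₁.2, hq₂.1, hq₂.2]
  obtain ⟨b, hb, hb₀⟩ := h'.exists_isFlatOn_cutPlane (c 0)
  have hcut (x : ℝ) (hx : x ∉ Ioo u (v + 1)) (y : ℝ) :
      (x, y) ∈ cutPlane (Q.image (shear s).symm) := fun q hq heq => by
    obtain rfl : q.1 = x := heq
    exact absurd (hQ' q hq) hx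
  have hb_vert (x : ℝ) (hx : x ∉ Ioo u (v + 1)) :
      𝒜.IsFlatOn (fun y => V (x - s * y, y)) (fun y => b (x, y)) (Icc 0 1) :=
    hb.comp (φ := fun y => (x, y)) (by fun_prop) fun y _ => hcut x hx y
  have hzero : (0 : ℝ) ∈ Icc (0 : ℝ) 1 := left_mem_Icc.2 zero_le_one
  have hone : (1 : ℝ) ∈ Icc (0 : ℝ) 1 := right_mem_Icc.2 zero_le_one
  have hbu : b (u, 1) = c 0 := by
    rw [← hb₀ (u, 0) (hcut u (by simp) 0) rfl]
    exact (hb_vert u (by simp)).eq_of_eqOn_const isPreconnected_Icc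
      (fun y hy => hleft _ (by nlinarith [hy.1])) hone hzero
  have hbv : b (v + 1, 1) = c 1 :=
    (hb_vert (v + 1) (by simp)).eq_of_eq
      (hc.congr_map fun y hy => hright _ (by nlinarith [hy.1, hy.2])) isPreconnected_Icc
      hzero hone (hb₀ _ (hcut _ (by simp) 0) rfl)
  rw [← hbu, ← hbv]
  exact (h'.abs_top_sub_top_le_card (injOn_fst_image_shear_symm hs) hb (by linarith) hQ').trans
    (Nat.cast_le.2 Finset.card_image_le)

end IsPuncturedStrip

/-! ### The flat bundle on the complement of a pencil of complex lines -/

theorem commute_translate_intCast (n : ℤ) (f : CircleDeg1Liftˣ) :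
    Commute (CircleDeg1Lift.translate (.ofAdd (n : ℝ))) f := by
  refine Units.ext (CircleDeg1Lift.ext fun t => ?_)
  simp only [Units.val_mul, CircleDeg1Lift.mul_apply, CircleDeg1Lift.translate_apply,
    CircleDeg1Lift.map_int_add]

/-- The complex plane cut along the vertical half-lines starting at the points of `Z` and going
down (`true`, the upper sheet) or up (`false`, the lower sheet). -/
def sheet (Z : Finset ℂ) : Bool → Set ℂ
  | true => {z | ∀ ζ ∈ Z, z.re = ζ.re → ζ.im < z.im}
  | false => {z | ∀ ζ ∈ Z, z.re = ζ.re → z.im < ζ.im}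

/-- The number of points of `Z` to the left of `z`. -/
def leftCount (Z : Finset ℂ) (z : ℂ) : ℕ := (Z.filter fun ζ => ζ.re < z.re).card

/-- The coordinate change from the upper to the lower sheet. -/
def sheetFrame (Z : Finset ℂ) (g : ℕ → CircleDeg1Liftˣ) : Bool → ℂ → CircleDeg1Liftˣ
  | true, _ => 1
  | false, z => g (leftCount Z z)

section Sheet

variable {Z : Finset ℂ} {g : ℕ → CircleDeg1Liftˣ} {z ζ : ℂ}

theorem isOpen_sheet (Z : Finset ℂ) (ε : Bool) : IsOpen (sheet Z ε) := by
  have hre (ζ : ℂ) : IsOpen {z : ℂ | z.re ≠ ζ.re} :=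
    isOpen_ne_fun Complex.continuous_re continuous_const
  have hbelow (ζ : ℂ) : IsOpen {z : ℂ | z.im < ζ.im} :=
    isOpen_lt Complex.continuous_im continuous_const
  have habove (ζ : ℂ) : IsOpen {z : ℂ | ζ.im < z.im} :=
    isOpen_lt continuous_const Complex.continuous_im
  cases ε
  · have hsheet : sheet Z false = ⋂ ζ ∈ Z, ({z | z.re ≠ ζ.re} ∪ {z | z.im < ζ.im}) := by
      ext z
      simp [sheet, imp_iff_not_or]
    exact hsheet ▸ isOpen_biInter_finset fun ζ _ => (hre ζ).union (hbelow ζ)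
  · have hsheet : sheet Z true = ⋂ ζ ∈ Z, ({z | z.re ≠ ζ.re} ∪ {z | ζ.im < z.im}) := by
      ext z
      simp [sheet, imp_iff_not_or]
    exact hsheet ▸ isOpen_biInter_finset fun ζ _ => (hre ζ).union (habove ζ)

theorem exists_mem_sheet (hZ : InjOn Complex.re (Z : Set ℂ)) (hz : z ∉ Z) :
    ∃ ε, z ∈ sheet Z ε := by
  by_cases hζ : ∃ ζ ∈ Z, z.re = ζ.re
  · obtain ⟨ζ, hζZ, hre⟩ := hζ
    have huniq : ∀ ζ' ∈ Z, z.re = ζ'.re → ζ' = ζ :=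
      fun ζ' hζ' h => hZ hζ' hζZ (h.symm.trans hre)
    have him : z.im ≠ ζ.im := fun him => hz (Complex.ext hre him ▸ hζZ)
    rcases him.lt_or_gt with hlt | hgt
    · exact ⟨false, fun ζ' hζ' h => huniq ζ' hζ' h ▸ hlt⟩
    · exact ⟨true, fun ζ' hζ' h => huniq ζ' hζ' h ▸ hgt⟩
  · push Not at hζ
    exact ⟨true, fun ζ hζZ h => absurd h (hζ ζ hζZ)⟩

theorem notMem_of_mem_sheet {ε : Bool} (hz : z ∈ sheet Z ε) : z ∉ Z := by
  intro hzZ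
  cases ε <;> exact lt_irrefl _ (hz z hzZ rfl)

theorem eventually_re_lt_iff (h : ζ.re ≠ z.re) : ∀ᶠ z' in 𝓝 z, (ζ.re < z'.re ↔ ζ.re < z.re) := by
  rcases h.lt_or_gt with hlt | hgt
  · filter_upwards [Complex.continuous_re.continuousAt.eventually_const_lt hlt] with z' hz'
    exact iff_of_true hz' hlt
  · filter_upwards [Complex.continuous_re.continuousAt.eventually_lt_const hgt] with z' hz'
    exact iff_of_false hz'.not_gt hgt.not_gt

theorem eventually_leftCount_eq (hz : ∀ ζ ∈ Z, ζ.re ≠ z.re) :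
    ∀ᶠ z' in 𝓝 z, leftCount Z z' = leftCount Z z := by
  filter_upwards [(Finset.eventually_all Z).2 fun ζ hζ => eventually_re_lt_iff (hz ζ hζ)]
    with z' hz'
  rw [leftCount, leftCount, Finset.filter_congr hz']

theorem eventually_leftCount_near (hZ : InjOn Complex.re (Z : Set ℂ)) (hζ : ζ ∈ Z) :
    ∀ᶠ z in 𝓝 ζ, leftCount Z z = leftCount Z ζ ∨ leftCount Z z = leftCount Z ζ + 1 := by
  have herase : ∀ ζ' ∈ Z.erase ζ, ζ'.re ≠ ζ.re := fun ζ' hζ' h =>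
    (Finset.mem_erase.1 hζ').1 (hZ (Finset.mem_erase.1 hζ').2 hζ h)
  have hinsert (z : ℂ) :
      leftCount Z z = leftCount (Z.erase ζ) z + if ζ.re < z.re then 1 else 0 := by
    conv_lhs => rw [leftCount, ← Finset.insert_erase hζ, Finset.filter_insert]
    split_ifs
    · exact Finset.card_insert_of_notMem (by simp)
    · rfl
  filter_upwards [eventually_leftCount_eq herase] with z hz
  rw [hinsert z, hinsert ζ, hz, if_neg (lt_irrefl _)]
  split_ifs <;> simp

theorem eventually_sheetFrame_mul_inv_eq {ε ε' : Bool} (hz : z ∈ sheet Z ε)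
    (hz' : z ∈ sheet Z ε') :
    ∀ᶠ y in 𝓝 z, sheetFrame Z g ε' y * (sheetFrame Z g ε y)⁻¹ =
      sheetFrame Z g ε' z * (sheetFrame Z g ε z)⁻¹ := by
  have hcount (hfalse : z ∈ sheet Z false) (htrue : z ∈ sheet Z true) :
      ∀ᶠ y in 𝓝 z, leftCount Z y = leftCount Z z :=
    eventually_leftCount_eq fun ζ hζ h =>
      lt_asymm (hfalse ζ hζ h.symm) (htrue ζ hζ h.symm)
  cases ε <;> cases ε'
  · exact .of_forall fun y => by rw [mul_inv_cancel, mul_inv_cancel]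
  · exact (hcount hz hz').mono fun y hy => by
      simp only [sheetFrame, hy]
  · exact (hcount hz' hz).mono fun y hy => by
      simp only [sheetFrame, hy]
  · exact .of_forall fun _ => rfl

end Sheet

/-- The frame over the chart of the line `z = v.1 / v.2` given by the sheet `ε`, where the argument
of `v.2` is the one continuous near `b₀`. -/
def pencilFrame (Z : Finset ℂ) (m : ℕ) (g : ℕ → CircleDeg1Liftˣ) (i : Bool × ℂ) (v : ℂ × ℂ) :
    CircleDeg1Liftˣ :=
  CircleDeg1Lift.translate (.ofAdd (m * turns (argNear i.2 v.2) v.2)) *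
    sheetFrame Z g i.1 (v.1 / v.2)

theorem pencilFrame_apply (Z : Finset ℂ) (m : ℕ) (g : ℕ → CircleDeg1Liftˣ) (i : Bool × ℂ)
    (v : ℂ × ℂ) (t : ℝ) : pencilFrame Z m g i v t =
      m * turns (argNear i.2 v.2) v.2 + sheetFrame Z g i.1 (v.1 / v.2) t := by
  rw [pencilFrame, Units.val_mul, CircleDeg1Lift.mul_apply, CircleDeg1Lift.translate_apply]

theorem pencilFrame_mul_inv (Z : Finset ℂ) (m : ℕ) (g : ℕ → CircleDeg1Liftˣ) {i j : Bool × ℂ}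
    {v : ℂ × ℂ} (hi : v.2 / i.2 ∈ Complex.slitPlane) :
    pencilFrame Z m g j v * (pencilFrame Z m g i v)⁻¹ =
      CircleDeg1Lift.translate
        (.ofAdd (m * (turns (argNear j.2 v.2) v.2 - turns (argNear i.2 v.2) v.2))) *
      (sheetFrame Z g j.1 (v.1 / v.2) * (sheetFrame Z g i.1 (v.1 / v.2))⁻¹) := by
  obtain ⟨hi₀, hv⟩ := ne_zero_of_div_mem_slitPlane hi
  obtain ⟨n, hn⟩ := turns_eq_intCast (coe_argNear hi₀ hv)
  have hcomm := (commute_translate_intCast (-(m * n))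
    (sheetFrame Z g j.1 (v.1 / v.2) * (sheetFrame Z g i.1 (v.1 / v.2))⁻¹)).eq
  have hcast : ((-(m * n) : ℤ) : ℝ) = -(m * n) := by push_cast; ring
  have htrans (x : ℝ) : CircleDeg1Lift.translate (.ofAdd (m * (x - n))) =
      CircleDeg1Lift.translate (.ofAdd (m * x)) * CircleDeg1Lift.translate (.ofAdd (-(m * n))) := by
    rw [← map_mul, ← ofAdd_add, mul_sub, sub_eq_add_neg]
  rw [hn, htrans, mul_assoc, ← hcast, hcomm, hcast]
  simp only [pencilFrame, mul_inv_rev, hn, ← map_inv, ofAdd_neg, mul_assoc]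

theorem eventually_div_mem_slitPlane {v : ℂ × ℂ} {b₀ : ℂ} (hv : v.2 / b₀ ∈ Complex.slitPlane) :
    ∀ᶠ y : ℂ × ℂ in 𝓝 v, y.2 / b₀ ∈ Complex.slitPlane :=
  (continuous_snd.div_const b₀).continuousAt.eventually_mem (Complex.isOpen_slitPlane.mem_nhds hv)

theorem continuousAt_fst_div_snd {v : ℂ × ℂ} (hv : v.2 ≠ 0) :
    ContinuousAt (fun y : ℂ × ℂ => y.1 / y.2) v :=
  continuousAt_fst.div continuousAt_snd hv

/-- The complex lines `v.2 = 0` and `v.1 = ζ * v.2`, `ζ ∈ Z`, in `ℂ²`. -/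
def pencil (Z : Finset ℂ) : Set (ℂ × ℂ) := {v | v.2 = 0 ∨ v.1 / v.2 ∈ Z}

/-- The flat bundle off the lines of `pencil Z`. Crossing the half-line
above the `j`-th point of `Z` has holonomy `g (j + 1) * (g j)⁻¹`, and turning once around the
line `v.2 = 0` along a fibre of the Hopf map translates by `-m`. -/
def pencilAtlas (Z : Finset ℂ) (m : ℕ) (g : ℕ → CircleDeg1Liftˣ) :
    FlatAtlas (Bool × ℂ) (ℂ × ℂ) where
  baseSet i := {v | v.2 / i.2 ∈ Complex.slitPlane ∧ v.1 / v.2 ∈ sheet Z i.1}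
  isOpen_baseSet i := isOpen_iff_mem_nhds.2 fun v hv =>
    (eventually_div_mem_slitPlane hv.1).and <|
      (continuousAt_fst_div_snd (ne_zero_of_div_mem_slitPlane hv.1).2).eventually_mem
        ((isOpen_sheet Z i.1).mem_nhds hv.2)
  frame := pencilFrame Z m g
  eventually_frame_mul_inv_eq i j v hi hj := by
    obtain ⟨hi₀, hv⟩ := ne_zero_of_div_mem_slitPlane hi.1
    have hj₀ := (ne_zero_of_div_mem_slitPlane hj.1).1
    have hne : ∀ᶠ y : ℂ × ℂ in 𝓝 v, y.2 ≠ 0 := continuousAt_snd.eventually_ne hv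
    have hcont {b₀ : ℂ} (hb : v.2 / b₀ ∈ Complex.slitPlane) :
        ContinuousAt (fun y : ℂ × ℂ => argNear b₀ y.2) v :=
      (continuousAt_argNear hb).comp (f := Prod.snd) continuousAt_snd
    have hturns := eventually_turns_sub_turns_eq (mem_univ v) (f := Prod.snd)
      (hcont hj.1).continuousWithinAt (hcont hi.1).continuousWithinAt
      (by simpa using hne.mono fun y hy => coe_argNear hj₀ hy)
      (by simpa using hne.mono fun y hy => coe_argNear hi₀ hy)
    rw [nhdsWithin_univ] at hturns
    filter_upwards [hturns, eventually_div_mem_slitPlane hi.1,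
      (continuousAt_fst_div_snd hv).eventually
        (eventually_sheetFrame_mul_inv_eq (g := g) hi.2 hj.2)] with y hturns hy hsheet
    rw [pencilFrame_mul_inv Z m g hy, pencilFrame_mul_inv Z m g hi.1, hturns, hsheet]

/-! ### Parallel sections of the bundle of a pencil -/

theorem argNear_neg_I_of_re_pos {z : ℂ} (hz : 0 < z.re) :
    argNear (-Complex.I) z = argNear Complex.I z := by
  have him : (z / Complex.I).im < 0 := by simpa [Complex.div_I] using hz
  rw [argNear, argNear, div_neg, Complex.arg_neg_eq_arg_add_pi_of_im_neg him, Complex.arg_I,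
    Complex.arg_neg_I]
  ring

theorem argNear_I_of_re_neg {z : ℂ} (hz : z.re < 0) :
    argNear Complex.I z = argNear (-Complex.I) z + 2 * Real.pi := by
  have him : 0 < (z / Complex.I).im := by simpa [Complex.div_I] using hz
  rw [argNear, argNear, div_neg, Complex.arg_neg_eq_arg_sub_pi_of_im_pos him, Complex.arg_I,
    Complex.arg_neg_I]
  ring

theorem div_I_mem_slitPlane {z : ℂ} (hz : z ≠ 0) (him : 0 ≤ z.im) :
    z / Complex.I ∈ Complex.slitPlane := by
  rw [Complex.mem_slitPlane_iff]
  by_cases hre : z.re = 0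
  · exact .inl (by simpa [Complex.div_I] using him.lt_of_ne' fun h => hz (Complex.ext hre h))
  · exact .inr (by simpa [Complex.div_I] using hre)

theorem div_neg_I_mem_slitPlane {z : ℂ} (him : z.im < 0) :
    z / -Complex.I ∈ Complex.slitPlane :=
  Complex.mem_slitPlane_iff.2 (.inl (by simpa [div_neg, Complex.div_I] using him))

theorem fourierChar_intCast (n : ℤ) : Real.fourierChar n = 1 := by
  ext
  rw [Real.fourierChar_apply, Circle.coe_one, Complex.exp_eq_one_iff]
  exact ⟨n, by push_cast; ring⟩

theorem coe_arg_fourierChar_mul (y : ℝ) {b : ℂ} (hb : b ≠ 0) :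
    ((Real.fourierChar y * b : ℂ).arg : Real.Angle) = (b.arg + 2 * Real.pi * y : ℝ) := by
  rw [Complex.arg_mul_coe_angle (Circle.coe_ne_zero _) hb, Real.fourierChar_apply,
    Complex.arg_exp, Real.Angle.coe_toIocMod, Real.Angle.coe_add, add_comm]
  simp

section Pencil

variable {Z : Finset ℂ} {m : ℕ} {g : ℕ → CircleDeg1Liftˣ}

theorem mem_domain_pencilAtlas_iff (hZ : InjOn Complex.re (Z : Set ℂ)) {v : ℂ × ℂ} :
    v ∈ (pencilAtlas Z m g).domain ↔ v ∉ pencil Z := by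
  refine ⟨fun hv => ?_, fun hv => ?_⟩
  · obtain ⟨i, hi⟩ := mem_iUnion.1 hv
    exact not_or.2 ⟨(ne_zero_of_div_mem_slitPlane hi.1).2, notMem_of_mem_sheet hi.2⟩
  · obtain ⟨hb, hz⟩ := not_or.1 hv
    obtain ⟨ε, hε⟩ := exists_mem_sheet hZ hz
    exact mem_iUnion.2 ⟨(ε, v.2), div_self_mem_slitPlane hb, hε⟩

section

variable {A : Type*} [TopologicalSpace A] {F : A → ℂ × ℂ} {S : Set A} {a : A}

/-- If `θ` is a continuous choice of argument of `(F a).2`, then `-m * turns θ (F a).2` accounts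
for the holonomy around the line `v.2 = 0`. -/
theorem isFlatWithinAt_sub_mul_turns (ha : a ∈ S) (hF : ContinuousWithinAt F S a)
    (hb : (F a).2 ≠ 0) {ε : Bool} (hε : (F a).1 / (F a).2 ∈ sheet Z ε) {θ : A → ℝ}
    (hθ : ContinuousWithinAt θ S a)
    (hangle : ∀ᶠ a' in 𝓝[S] a, (θ a' : Real.Angle) = (F a').2.arg) {e : A → ℝ}
    (he : ∀ᶠ a' in 𝓝[S] a, sheetFrame Z g ε ((F a').1 / (F a').2) (e a') =
      sheetFrame Z g ε ((F a).1 / (F a).2) (e a)) :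
    (pencilAtlas Z m g).IsFlatWithinAt F (fun a' => e a' - m * turns (θ a') (F a').2) S a := by
  have hslit := div_self_mem_slitPlane hb
  have hsnd : ContinuousWithinAt (fun a' => (F a').2) S a :=
    continuous_snd.continuousAt.comp_continuousWithinAt hF
  have hnear : ContinuousWithinAt (fun a' => argNear (F a).2 (F a').2) S a :=
    (continuousAt_argNear hslit).comp_continuousWithinAt (f := fun a' => (F a').2) hsnd
  have hturns := eventually_turns_sub_turns_eq ha hnear hθ
    ((hsnd.eventually_ne hb).mono fun a' ha' => coe_argNear hb ha') hangle
  have hframe {a' : A} (hangle : (θ a' : Real.Angle) = (F a').2.arg) :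
      pencilFrame Z m g (ε, (F a).2) (F a') (e a' - m * turns (θ a') (F a').2) =
        m * (turns (argNear (F a).2 (F a').2) (F a').2 - turns (θ a') (F a').2) +
          sheetFrame Z g ε ((F a').1 / (F a').2) (e a') := by
    obtain ⟨n, hn⟩ := turns_eq_intCast hangle
    have hcast : (m : ℝ) * n = (m * n : ℤ) := by push_cast; rfl
    rw [pencilFrame_apply, hn, hcast, CircleDeg1Lift.map_sub_int, ← hcast]
    ring
  refine ⟨hF, (ε, (F a).2), ⟨hslit, hε⟩, ?_⟩
  filter_upwards [hturns, hangle, he] with a' hturns hangle' he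
  exact (hframe hangle').trans
    (by rw [hturns, he]; exact (hframe (hangle.self_of_nhdsWithin ha)).symm)

end

theorem exists_isFlatOn_fourierChar_smul (hZ : InjOn Complex.re (Z : Set ℂ)) {w : ℂ × ℂ}
    (hw : w ∈ (pencilAtlas Z m g).domain) (d : ℤ) (S : Set ℝ) :
    ∃ c : ℝ → ℝ, (pencilAtlas Z m g).IsFlatOn (fun y : ℝ => Real.fourierChar (d * y) • w) c S ∧
      c 1 - c 0 = -(m * d) := by
  obtain ⟨hb, hz⟩ := not_or.1 ((mem_domain_pencilAtlas_iff hZ).1 hw)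
  obtain ⟨ε, hε⟩ := exists_mem_sheet hZ hz
  have hdiv (y : ℝ) : (Real.fourierChar y • w).1 / (Real.fourierChar y • w).2 = w.1 / w.2 :=
    mul_div_mul_left _ _ (Circle.coe_ne_zero _)
  let θ : ℝ → ℝ := fun y => w.2.arg + 2 * Real.pi * (d * y)
  refine ⟨fun y => 0 - m * turns (θ y) (Real.fourierChar (d * y) • w).2,
    fun y hy => isFlatWithinAt_sub_mul_turns hy ?_ ?_ (by rwa [hdiv]) (by fun_prop) ?_ ?_, ?_⟩
  · exact ((Real.continuous_fourierChar.comp (by fun_prop)).smul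
      continuous_const).continuousWithinAt
  · exact mul_ne_zero (Circle.coe_ne_zero _) hb
  · exact .of_forall fun y' => (coe_arg_fourierChar_mul _ hb).symm
  · exact .of_forall fun y' => by rw [hdiv, hdiv]
  · simp only [mul_one, fourierChar_intCast, one_smul, mul_zero, AddChar.map_zero_eq_one, add_zero,
      turns, θ]
    field_simp
    ring

/-- Near a line `v.1 = ζ * v.2` the section is a common value of two consecutive frames. -/
theorem exists_isFlatOn_near_line (hZ : InjOn Complex.re (Z : Set ℂ))
    (hg : ∀ j, ∃ s, g j s = g (j + 1) s) {v₀ : ℂ × ℂ} (hv₀ : v₀.2 ≠ 0) (hζ : v₀.1 / v₀.2 ∈ Z) :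
    ∃ U ∈ 𝓝 v₀, ∃ κ, (pencilAtlas Z m g).IsFlatOn id κ (U ∩ (pencilAtlas Z m g).domain) := by
  obtain ⟨s, hs⟩ := hg (leftCount Z (v₀.1 / v₀.2))
  have hU := (eventually_div_mem_slitPlane (div_self_mem_slitPlane hv₀)).and
    ((continuousAt_fst_div_snd hv₀).eventually (eventually_leftCount_near hZ hζ))
  refine ⟨_, hU, fun v => s - m * turns (argNear v₀.2 v.2) v.2, fun v hv => ?_⟩
  obtain ⟨hb, hz⟩ := not_or.1 ((mem_domain_pencilAtlas_iff hZ).1 hv.2)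
  obtain ⟨ε, hε⟩ := exists_mem_sheet hZ hz
  have hframe {v : ℂ × ℂ} (hv : leftCount Z (v.1 / v.2) = leftCount Z (v₀.1 / v₀.2) ∨
      leftCount Z (v.1 / v.2) = leftCount Z (v₀.1 / v₀.2) + 1) :
      sheetFrame Z g ε (v.1 / v.2) s = sheetFrame Z g ε (v₀.1 / v₀.2) s := by
    cases ε
    · rcases hv with hv | hv
      · rw [sheetFrame, sheetFrame, hv]
      · rw [sheetFrame, sheetFrame, hv, hs]
    · rfl
  refine isFlatWithinAt_sub_mul_turns (F := id) hv continuousWithinAt_id hb hε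
    ((continuousAt_argNear hv.1.1).comp (f := Prod.snd) continuousAt_snd).continuousWithinAt ?_ ?_
  · filter_upwards [self_mem_nhdsWithin] with v' hv'
    exact coe_argNear hv₀ (not_or.1 ((mem_domain_pencilAtlas_iff hZ).1 hv'.2)).1
  · filter_upwards [self_mem_nhdsWithin] with v' hv'
    exact (hframe hv'.1.2).trans (hframe hv.1.2).symm

theorem leftCount_eq_zero {z : ℂ} (hz : ∀ ζ ∈ Z, |ζ.re| < |z.re|) (hneg : z.re < 0) :
    leftCount Z z = 0 := by
  refine Finset.card_eq_zero.2 (Finset.filter_eq_empty_iff.2 fun ζ hζ => not_lt.2 ?_)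
  have hlt := hz ζ hζ
  rw [abs_of_neg hneg] at hlt
  linarith [neg_abs_le ζ.re]

theorem leftCount_eq_card {z : ℂ} (hz : ∀ ζ ∈ Z, |ζ.re| < |z.re|) (hpos : 0 < z.re) :
    leftCount Z z = Z.card := by
  rw [leftCount, Finset.filter_true_of_mem fun ζ hζ => ?_]
  have hlt := hz ζ hζ
  rw [abs_of_pos hpos] at hlt
  exact (le_abs_self _).trans_lt hlt

theorem mem_sheet_of_norm_lt {z : ℂ} (hz : ∀ ζ ∈ Z, ‖ζ‖ < ‖z‖) :
    z ∈ sheet Z (decide (0 ≤ z.im)) := by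
  have him {ζ : ℂ} (hζ : ζ ∈ Z) (hre : z.re = ζ.re) : |ζ.im| < |z.im| := by
    have hsq := sq_lt_sq₀ (norm_nonneg _) (norm_nonneg _) |>.2 (hz ζ hζ)
    rw [Complex.sq_norm, Complex.sq_norm, Complex.normSq_apply, Complex.normSq_apply, hre] at hsq
    exact sq_lt_sq.1 (by linarith)
  by_cases h : 0 ≤ z.im
  · rw [decide_eq_true h]
    intro ζ hζ hre
    have hlt := him hζ hre
    rw [abs_of_nonneg h] at hlt
    exact (le_abs_self _).trans_lt hlt
  · rw [decide_eq_false h]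
    intro ζ hζ hre
    have hlt := him hζ hre
    rw [abs_of_neg (not_le.1 h)] at hlt
    linarith [neg_abs_le ζ.im]

/-- The parallel section near the point `(a₀, 0)` of the line `v.2 = 0`, in the upper (`true`) and
in the lower (`false`) sheet. -/
def sectionAtInfinity (Z : Finset ℂ) (m : ℕ) (g : ℕ → CircleDeg1Liftˣ) (t : ℝ) (a₀ : ℂ) :
    Bool → ℂ × ℂ → ℝ
  | true, v => t - m * turns (argNear a₀ v.1 - argNear Complex.I (v.1 / v.2)) v.2
  | false, v => (g (leftCount Z (v.1 / v.2)))⁻¹ (t + m) -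
      m * turns (argNear a₀ v.1 - argNear (-Complex.I) (v.1 / v.2)) v.2

theorem sectionAtInfinity_eq (hcard : Z.card = m + 1) (hg₀ : g 0 = 1) {t : ℝ}
    (ht : g (m + 1) t = t + m) (a₀ : ℂ) {v : ℂ × ℂ}
    (hv : ∀ ζ ∈ Z, |ζ.re| < |(v.1 / v.2).re|) (ε ε' : Bool) :
    sectionAtInfinity Z m g t a₀ ε v = sectionAtInfinity Z m g t a₀ ε' v := by
  suffices h : sectionAtInfinity Z m g t a₀ true v = sectionAtInfinity Z m g t a₀ false v by
    cases ε <;> cases ε' <;> simp only [h]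
  obtain ⟨ζ, hζ⟩ := Finset.card_pos.1 (by omega : 0 < Z.card)
  have hre : (v.1 / v.2).re ≠ 0 := abs_pos.1 ((abs_nonneg _).trans_lt (hv ζ hζ))
  rcases hre.lt_or_gt with hneg | hpos
  · have hθ : argNear a₀ v.1 - argNear (-Complex.I) (v.1 / v.2) =
        argNear a₀ v.1 - argNear Complex.I (v.1 / v.2) + 2 * Real.pi := by
      rw [argNear_I_of_re_neg hneg]
      ring
    rw [sectionAtInfinity, sectionAtInfinity, leftCount_eq_zero hv hneg, hg₀, hθ,
      turns_add_two_pi, inv_one, Units.val_one, CircleDeg1Lift.coe_one, id]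
    ring
  · rw [sectionAtInfinity, sectionAtInfinity, leftCount_eq_card hv hpos, hcard,
      argNear_neg_I_of_re_pos hpos, ← ht, CircleDeg1Lift.units_inv_apply_apply]

theorem coe_argNear_sub_argNear {a a₀ b z₀ : ℂ} (ha₀ : a₀ ≠ 0) (ha : a ≠ 0) (hb : b ≠ 0)
    (hz₀ : z₀ ≠ 0) : ((argNear a₀ a - argNear z₀ (a / b) : ℝ) : Real.Angle) = b.arg := by
  rw [Real.Angle.coe_sub, coe_argNear ha₀ ha, coe_argNear hz₀ (div_ne_zero ha hb),
    Complex.arg_div_coe_angle ha hb, sub_sub_cancel]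

theorem isFlatWithinAt_sectionAtInfinity {S : Set (ℂ × ℂ)} {v : ℂ × ℂ} {a₀ : ℂ} (t : ℝ)
    (hS : ∀ v ∈ S, v.1 / a₀ ∈ Complex.slitPlane ∧ v.2 ≠ 0 ∧ ∀ ζ ∈ Z, ‖ζ‖ < ‖v.1 / v.2‖)
    (hv : v ∈ S) : (pencilAtlas Z m g).IsFlatWithinAt id
      (sectionAtInfinity Z m g t a₀ (decide (0 ≤ (v.1 / v.2).im))) S v := by
  obtain ⟨ha, hb, hnorm⟩ := hS v hv
  obtain ⟨ha₀, ha_ne⟩ := ne_zero_of_div_mem_slitPlane ha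
  have hsheet := mem_sheet_of_norm_lt hnorm
  have hcont {z₀ : ℂ} (hz₀ : v.1 / v.2 / z₀ ∈ Complex.slitPlane) :
      ContinuousWithinAt (fun v : ℂ × ℂ => argNear a₀ v.1 - argNear z₀ (v.1 / v.2)) S v :=
    (((continuousAt_argNear ha).comp (f := Prod.fst) continuousAt_fst).sub
      ((continuousAt_argNear hz₀).comp (f := fun v : ℂ × ℂ => v.1 / v.2)
        (continuousAt_fst_div_snd hb))).continuousWithinAt
  have hangle {z₀ : ℂ} (hz₀ : z₀ ≠ 0) : ∀ᶠ v in 𝓝[S] v,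
      ((argNear a₀ v.1 - argNear z₀ (v.1 / v.2) : ℝ) : Real.Angle) = v.2.arg := by
    filter_upwards [self_mem_nhdsWithin] with v' hv'
    obtain ⟨ha', hb', -⟩ := hS v' hv'
    exact coe_argNear_sub_argNear ha₀ (ne_zero_of_div_mem_slitPlane ha').2 hb' hz₀
  by_cases him : 0 ≤ (v.1 / v.2).im
  · rw [decide_eq_true him] at hsheet ⊢
    exact isFlatWithinAt_sub_mul_turns (F := id) hv continuousWithinAt_id hb hsheet
      (hcont (div_I_mem_slitPlane (div_ne_zero ha_ne hb) him)) (hangle Complex.I_ne_zero)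
      (.of_forall fun _ => rfl)
  · rw [decide_eq_false him] at hsheet ⊢
    exact isFlatWithinAt_sub_mul_turns (F := id) hv continuousWithinAt_id hb hsheet
      (hcont (div_neg_I_mem_slitPlane (not_le.1 him)))
      (hangle (neg_ne_zero.2 Complex.I_ne_zero))
      (.of_forall fun _ => by simp only [sheetFrame, id, CircleDeg1Lift.units_apply_inv_apply])

theorem eventually_sign_im_or_abs_re_lt {z : ℂ} (hz : ∀ ζ ∈ Z, ‖ζ‖ < ‖z‖) :
    ∀ᶠ y in 𝓝 z, (0 ≤ y.im ↔ 0 ≤ z.im) ∨ ∀ ζ ∈ Z, |ζ.re| < |y.re| := by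
  rcases lt_trichotomy z.im 0 with him | him | him
  · filter_upwards [Complex.continuous_im.continuousAt.eventually_lt_const him] with y hy
    exact .inl (iff_of_false hy.not_ge him.not_ge)
  · refine Eventually.mono ((Finset.eventually_all Z).2 fun ζ hζ => ?_) fun _ => Or.inr
    refine Complex.continuous_re.abs.continuousAt.eventually_const_lt ?_
    change |ζ.re| < |z.re|
    rw [Complex.abs_re_eq_norm.2 him]
    exact (Complex.abs_re_le_norm ζ).trans_lt (hz ζ hζ)
  · filter_upwards [Complex.continuous_im.continuousAt.eventually_const_lt him] with y hy
    exact .inl (iff_of_true hy.le him.le)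

theorem exists_isFlatOn_near_infinity (hZ : InjOn Complex.re (Z : Set ℂ))
    (hcard : Z.card = m + 1) (hg₀ : g 0 = 1) {t : ℝ} (ht : g (m + 1) t = t + m) {v₀ : ℂ × ℂ}
    (hv₀ : v₀.1 ≠ 0) (hv₀' : v₀.2 = 0) :
    ∃ U ∈ 𝓝 v₀, ∃ κ, (pencilAtlas Z m g).IsFlatOn id κ (U ∩ (pencilAtlas Z m g).domain) := by
  have hslit : ∀ᶠ v : ℂ × ℂ in 𝓝 v₀, v.1 / v₀.1 ∈ Complex.slitPlane :=
    (continuous_fst.div_const v₀.1).continuousAt.eventually_mem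
      (Complex.isOpen_slitPlane.mem_nhds (div_self_mem_slitPlane hv₀))
  have hnorm : ∀ᶠ v : ℂ × ℂ in 𝓝 v₀, ∀ ζ ∈ Z, ‖ζ‖ * ‖v.2‖ < ‖v.1‖ :=
    (Finset.eventually_all Z).2 fun ζ _ =>
      (by fun_prop : ContinuousAt (fun v : ℂ × ℂ => ‖ζ‖ * ‖v.2‖) v₀).eventually_lt
        continuousAt_fst.norm (by simpa [hv₀'] using hv₀)
  refine ⟨_, hslit.and hnorm, fun v =>
    sectionAtInfinity Z m g t v₀.1 (decide (0 ≤ (v.1 / v.2).im)) v, fun v hv => ?_⟩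
  set S := {v : ℂ × ℂ | v.1 / v₀.1 ∈ Complex.slitPlane ∧ ∀ ζ ∈ Z, ‖ζ‖ * ‖v.2‖ < ‖v.1‖} ∩
    (pencilAtlas Z m g).domain
  have hS : ∀ v ∈ S,
      v.1 / v₀.1 ∈ Complex.slitPlane ∧ v.2 ≠ 0 ∧ ∀ ζ ∈ Z, ‖ζ‖ < ‖v.1 / v.2‖ := fun v hv => by
    have hb := (not_or.1 ((mem_domain_pencilAtlas_iff hZ).1 hv.2)).1
    refine ⟨hv.1.1, hb, fun ζ hζ => ?_⟩
    rw [norm_div, lt_div_iff₀ (norm_pos_iff.2 hb)]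
    exact hv.1.2 ζ hζ
  obtain ⟨-, hb, hz⟩ := hS v hv
  refine (isFlatWithinAt_sectionAtInfinity t hS hv).congr_section hv ?_
  filter_upwards [((continuousAt_fst_div_snd hb).eventually
    (eventually_sign_im_or_abs_re_lt hz)).filter_mono nhdsWithin_le_nhds] with y hy
  rcases hy with hiff | hre
  · simp only [hiff]
  · exact sectionAtInfinity_eq hcard hg₀ ht _ hre _ _

theorem exists_isFlatOn_near_pencil (hZ : InjOn Complex.re (Z : Set ℂ)) (hcard : Z.card = m + 1)
    (hg₀ : g 0 = 1) (hg : ∀ j, ∃ s, g j s = g (j + 1) s) {t : ℝ} (ht : g (m + 1) t = t + m)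
    {v₀ : ℂ × ℂ} (hv₀ : v₀ ≠ 0) (hmem : v₀ ∈ pencil Z) :
    ∃ U ∈ 𝓝 v₀, ∃ κ, (pencilAtlas Z m g).IsFlatOn id κ (U ∩ (pencilAtlas Z m g).domain) := by
  by_cases hb : v₀.2 = 0
  · exact exists_isFlatOn_near_infinity hZ hcard hg₀ ht (fun ha => hv₀ (Prod.ext ha hb)) hb
  · exact exists_isFlatOn_near_line hZ hg hb (hmem.resolve_left hb)

theorem isPuncturedStrip_pencilAtlas (hZ : InjOn Complex.re (Z : Set ℂ)) (hcard : Z.card = m + 1)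
    (hg₀ : g 0 = 1) (hg : ∀ j, ∃ s, g j s = g (j + 1) s) {t : ℝ} (ht : g (m + 1) t = t + m)
    {V : ℝ × ℝ → ℂ × ℂ} (hV : Continuous V) (hV₀ : ∀ p, V p ≠ 0) {w : ℂ × ℂ}
    (hw : w ∉ pencil Z) (hside : ∀ p : ℝ × ℝ, p.2 ∉ Ioo (0 : ℝ) 1 → V p = w)
    {Q : Finset (ℝ × ℝ)} (hQ : ∀ p, p ∈ Q ↔ V p ∈ pencil Z) :
    IsPuncturedStrip (pencilAtlas Z m g) V w Q where
  continuous := hV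
  eq_of_notMem_Ioo := hside
  snd_mem_Ioo q hq := by
    by_contra hq'
    exact hw (hside q hq' ▸ (hQ q).1 hq)
  mem_domain p hp := (mem_domain_pencilAtlas_iff hZ).2 ((hQ p).not.1 hp)
  exists_isFlatOn_puncture q hq := by
    obtain ⟨U, hU, κ, hκ⟩ :=
      exists_isFlatOn_near_pencil hZ hcard hg₀ hg ht (hV₀ q) ((hQ q).1 hq)
    have hisolated : ((Q.erase q : Finset (ℝ × ℝ)) : Set (ℝ × ℝ))ᶜ ∈ 𝓝 q :=
      (Q.erase q).finite_toSet.isClosed.isOpen_compl.mem_nhds (by simp)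
    refine ⟨_, inter_mem (hV.continuousAt.preimage_mem_nhds hU) hisolated, κ ∘ V,
      hκ.comp hV.continuousOn fun p hp => ⟨hp.1.1, ?_⟩⟩
    refine (mem_domain_pencilAtlas_iff hZ).2 ((hQ p).not.1 fun hpQ => hp.1.2 ?_)
    exact Finset.mem_coe.2 (Finset.mem_erase.2 ⟨hp.2, hpQ⟩)

theorem circle_smul_mem_pencil_iff (u : Circle) {v : ℂ × ℂ} : u • v ∈ pencil Z ↔ v ∈ pencil Z := by
  have hdiv : (u • v).1 / (u • v).2 = v.1 / v.2 := mul_div_mul_left _ _ (Circle.coe_ne_zero u)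
  have hzero : (u • v).2 = 0 ↔ v.2 = 0 := mul_eq_zero.trans (or_iff_right (Circle.coe_ne_zero u))
  rw [pencil, mem_ofPred_eq, mem_ofPred_eq, hdiv, hzero]

theorem abs_mul_le_card_of_mem_pencil_iff (hZ : InjOn Complex.re (Z : Set ℂ))
    (hcard : Z.card = m + 1) {V : ℝ × ℝ → ℂ × ℂ} (hV : Continuous V) (hV₀ : ∀ p, V p ≠ 0)
    {w : ℂ × ℂ} (hw : w ∉ pencil Z) (hside : ∀ p : ℝ × ℝ, p.2 ∉ Ioo (0 : ℝ) 1 → V p = w)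
    (hleft : ∀ p : ℝ × ℝ, p.1 ≤ 0 → V p = w) {d : ℤ}
    (hright : ∀ p : ℝ × ℝ, 1 ≤ p.1 → p.2 ∈ Icc (0 : ℝ) 1 → V p = Real.fourierChar (d * p.2) • w)
    {Q : Finset (ℝ × ℝ)} (hQ : ∀ p, p ∈ Q ↔ V p ∈ pencil Z) : |d| * m ≤ Q.card := by
  obtain ⟨g, hg₀, hg, t, ht⟩ := exists_seq_circleDeg1Lift m
  have hstrip := isPuncturedStrip_pencilAtlas hZ hcard hg₀ hg ht hV hV₀ hw hside hQ
  obtain ⟨c, hc, hjump⟩ := exists_isFlatOn_fourierChar_smul (m := m) (g := g) hZ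
    ((mem_domain_pencilAtlas_iff hZ).2 hw) d (Icc 0 1)
  have hQ_fst (q : ℝ × ℝ) (hq : q ∈ Q) : q.1 ∈ Ioo (0 : ℝ) 1 := by
    have hmem := (hQ q).1 hq
    refine ⟨not_le.1 fun h => hw (hleft q h ▸ hmem), not_le.1 fun h => hw ?_⟩
    rwa [hright q h (Ioo_subset_Icc_self (hstrip.snd_mem_Ioo q hq)),
      circle_smul_mem_pencil_iff] at hmem
  have hright' (p : ℝ × ℝ) (hp : 1 ≤ p.1) : V p = V (1, p.2) := by
    by_cases hp' : p.2 ∈ Ioo (0 : ℝ) 1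
    · rw [hright p hp (Ioo_subset_Icc_self hp'), hright (1, p.2) le_rfl (Ioo_subset_Icc_self hp')]
    · rw [hside p hp', hside (1, p.2) hp']
  have hbound := hstrip.abs_sub_le_card zero_le_one hQ_fst hleft hright'
    (hc.congr_map fun y hy => hright (1, y) le_rfl hy)
  rw [hjump, abs_neg, abs_mul, Nat.abs_cast, mul_comm] at hbound
  exact_mod_cast hbound

end Pencil

/-! ### The Hopf correspondence -/

open scoped ComplexConjugate

/-- The first two coordinates of a point of `S²`, as a complex number. -/
def horizontal (y : Sphere2) : ℂ := ⟨y.1 0, y.1 1⟩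

/-- The last coordinate of a point of `S²`. -/
def height (y : Sphere2) : ℝ := y.1 2

@[fun_prop]
theorem continuous_horizontal : Continuous horizontal :=
  Complex.equivRealProdCLM.symm.continuous.comp
    (by fun_prop : Continuous fun y : Sphere2 => (y.1 0, y.1 1))

@[fun_prop]
theorem continuous_height : Continuous height := by
  unfold height
  fun_prop

theorem mul_conj_horizontal_add_sq_height (y : Sphere2) :
    horizontal y * conj (horizontal y) + (height y : ℂ) ^ 2 = 1 := by
  have hnorm := mem_sphere_zero_iff_norm.1 y.2
  rw [EuclideanSpace.norm_eq, Real.sqrt_eq_one, Fin.sum_univ_three] at hnorm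
  simp only [Real.norm_eq_abs, sq_abs] at hnorm
  rw [horizontal, Complex.mul_conj, Complex.normSq_mk, height, ← sq, ← sq]
  exact_mod_cast hnorm

/-- The cosine of the angle between two points of `S²`. -/
def cosAngle (y z : Sphere2) : ℝ :=
  (horizontal y * conj (horizontal z)).re + height y * height z

theorem ofReal_cosAngle (y z : Sphere2) : (cosAngle y z : ℂ) =
    (horizontal y * conj (horizontal z) + conj (horizontal y) * horizontal z) / 2 +
      height y * height z := by
  rw [cosAngle, Complex.ofReal_add, Complex.re_eq_add_conj, map_mul, Complex.conj_conj,
    Complex.ofReal_mul]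

theorem dist_sq_eq (y z : Sphere2) : dist y z ^ 2 = 2 - 2 * cosAngle y z := by
  have hinner : inner ℝ y.1 z.1 = cosAngle y z := by
    simp [PiLp.inner_apply, Fin.sum_univ_three, cosAngle, horizontal, height]
    ring
  rw [Subtype.dist_eq, dist_eq_norm, norm_sub_sq_real, hinner, mem_sphere_zero_iff_norm.1 y.2,
    mem_sphere_zero_iff_norm.1 z.2]
  ring

/-- The orthogonal projection of `ℂ²` onto the complex line that corresponds to the point `y` of
`S² = ℂℙ¹`. -/
def lineProj (y : Sphere2) : (ℂ × ℂ) →ₗ[ℂ] (ℂ × ℂ) where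
  toFun v := (((1 + height y) * v.1 + conj (horizontal y) * v.2) / 2,
    (horizontal y * v.1 + (1 - height y) * v.2) / 2)
  map_add' v v' := by ext <;> simp only [Prod.fst_add, Prod.snd_add] <;> ring
  map_smul' c v := by ext <;> simp <;> ring

theorem lineProj_apply (y : Sphere2) (v : ℂ × ℂ) :
    lineProj y v = (((1 + height y) * v.1 + conj (horizontal y) * v.2) / 2,
      (horizontal y * v.1 + (1 - height y) * v.2) / 2) :=
  rfl

theorem continuous_lineProj_apply {X : Type*} [TopologicalSpace X] {F : X → Sphere2}
    {v : X → ℂ × ℂ} (hF : Continuous F) (hv : Continuous v) :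
    Continuous fun x => lineProj (F x) (v x) := by
  have := Complex.continuous_conj
  simp only [lineProj_apply]
  fun_prop

theorem lineProj_lineProj_self (y : Sphere2) (v : ℂ × ℂ) :
    lineProj y (lineProj y v) = lineProj y v := by
  have hsphere := mul_conj_horizontal_add_sq_height y
  ext <;> simp only [lineProj_apply]
  · linear_combination v.1 / 4 * hsphere
  · linear_combination v.2 / 4 * hsphere

/-- The vector `v` spans the complex line that corresponds to the point `y` of `S² = ℂℙ¹`. -/
structure IsHopfLift (v : ℂ × ℂ) (y : Sphere2) : Prop where
  ne_zero : v ≠ 0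
  lineProj_eq : lineProj y v = v

namespace IsHopfLift

variable {v w : ℂ × ℂ} {y z : Sphere2}

theorem lineProj_lineProj (h : IsHopfLift v y) (z : Sphere2) :
    lineProj y (lineProj z v) = ((1 + cosAngle y z) / 2 : ℂ) • v := by
  obtain ⟨h₁, h₂⟩ := Prod.ext_iff.1 h.lineProj_eq
  simp only [lineProj_apply] at h₁ h₂
  ext <;> simp only [lineProj_apply, Prod.smul_fst, Prod.smul_snd, smul_eq_mul, ofReal_cosAngle]
  · linear_combination (1 - (height z : ℂ)) / 2 * h₁ - conj (horizontal z) / 2 * h₂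
  · linear_combination (1 + (height z : ℂ)) / 2 * h₂ - horizontal z / 2 * h₁

theorem lineProj (h : IsHopfLift v y) (hdist : dist y z < 2) :
    IsHopfLift (lineProj z v) z := by
  refine ⟨fun hzero => ?_, lineProj_lineProj_self z v⟩
  have hsmul := h.lineProj_lineProj z
  rw [hzero, map_zero, eq_comm, smul_eq_zero_iff_left h.ne_zero] at hsmul
  have hcos : 1 + cosAngle y z = 0 := by
    exact_mod_cast (div_eq_zero_iff.1 hsmul).resolve_right two_ne_zero
  nlinarith [dist_sq_eq y z, dist_nonneg (x := y) (y := z)]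

theorem unique (hy : IsHopfLift v y) (hz : IsHopfLift v z) : y = z := by
  have hsmul := hy.lineProj_lineProj z
  rw [hz.lineProj_eq, hy.lineProj_eq, eq_comm] at hsmul
  have hcos : (1 + cosAngle y z) / 2 = 1 := by
    exact_mod_cast smul_left_injective ℂ hy.ne_zero (hsmul.trans (one_smul ℂ v).symm)
  have hdist : dist y z ^ 2 = 0 := by rw [dist_sq_eq]; linarith
  exact dist_eq_zero.1 (pow_eq_zero_iff two_ne_zero |>.1 hdist)

theorem smul (h : IsHopfLift v y) {c : ℂ} (hc : c ≠ 0) : IsHopfLift (c • v) y :=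
  ⟨smul_ne_zero hc h.ne_zero, by rw [map_smul, h.lineProj_eq]⟩

end IsHopfLift

/-- The determinant of the matrix with columns `v` and `w`. -/
def det (v w : ℂ × ℂ) : ℂ := v.1 * w.2 - v.2 * w.1

theorem IsHopfLift.det_eq_zero {v w : ℂ × ℂ} {y : Sphere2} (hv : IsHopfLift v y)
    (hw : IsHopfLift w y) : det v w = 0 := by
  obtain ⟨hv₁, hv₂⟩ := Prod.ext_iff.1 hv.lineProj_eq
  obtain ⟨hw₁, hw₂⟩ := Prod.ext_iff.1 hw.lineProj_eq
  simp only [lineProj_apply] at hv₁ hv₂ hw₁ hw₂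
  rw [det]
  linear_combination -w.2 * hv₁ + v.2 * hw₁ + w.1 * hv₂ - v.1 * hw₂

/-- The sum of the squared norms of the coordinates, as a complex number. -/
def hermitianSq (v : ℂ × ℂ) : ℂ := v.1 * conj v.1 + v.2 * conj v.2

theorem hermitianSq_ne_zero {v : ℂ × ℂ} (hv : v ≠ 0) : hermitianSq v ≠ 0 := by
  rw [hermitianSq, Complex.mul_conj, Complex.mul_conj, ← Complex.ofReal_add, Complex.ofReal_ne_zero]
  intro hsum
  rw [add_eq_zero_iff_of_nonneg (Complex.normSq_nonneg _) (Complex.normSq_nonneg _),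
    map_eq_zero, map_eq_zero] at hsum
  exact hv (Prod.ext hsum.1 hsum.2)

/-- The coefficient `c` for which `c • v` is the orthogonal projection of `w` to `ℂ v`. -/
def coefficient (v w : ℂ × ℂ) : ℂ := (conj v.1 * w.1 + conj v.2 * w.2) / hermitianSq v

theorem coefficient_smul {v w : ℂ × ℂ} (hv : v ≠ 0) (hdet : det v w = 0) :
    coefficient v w • v = w := by
  have hne := hermitianSq_ne_zero hv
  rw [det] at hdet
  ext <;> simp only [coefficient, Prod.smul_fst, Prod.smul_snd, smul_eq_mul]
  · rw [div_mul_eq_mul_div, div_eq_iff hne, hermitianSq]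
    linear_combination conj v.2 * hdet
  · rw [div_mul_eq_mul_div, div_eq_iff hne, hermitianSq]
    linear_combination -conj v.1 * hdet

theorem coefficient_ne_zero {v w : ℂ × ℂ} (hv : v ≠ 0) (hw : w ≠ 0) (hdet : det v w = 0) :
    coefficient v w ≠ 0 := fun hzero => hw <| by
  rw [← coefficient_smul hv hdet, hzero, zero_smul]

theorem IsHopfLift.eq_iff_det_eq_zero {v w : ℂ × ℂ} {y z : Sphere2} (hv : IsHopfLift v y)
    (hw : IsHopfLift w z) : y = z ↔ det v w = 0 := by
  refine ⟨fun h => hv.det_eq_zero (h ▸ hw), fun h => ?_⟩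
  refine IsHopfLift.unique (v := w) ?_ hw
  rw [← coefficient_smul hv.ne_zero h]
  exact hv.smul (coefficient_ne_zero hv.ne_zero hw.ne_zero h)

theorem exists_continuous_smul_eq {X : Type*} [TopologicalSpace X] {F : X → Sphere2}
    {v w : X → ℂ × ℂ} (hv : Continuous v) (hw : Continuous w)
    (hvF : ∀ x, IsHopfLift (v x) (F x)) (hwF : ∀ x, IsHopfLift (w x) (F x)) :
    ∃ a : X → ℂ, Continuous a ∧ (∀ x, a x ≠ 0) ∧ ∀ x, a x • v x = w x := by
  have hdet (x : X) : det (v x) (w x) = 0 := (hvF x).det_eq_zero (hwF x)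
  refine ⟨fun x => coefficient (v x) (w x), ?_,
    fun x => coefficient_ne_zero (hvF x).ne_zero (hwF x).ne_zero (hdet x),
    fun x => coefficient_smul (hvF x).ne_zero (hdet x)⟩
  have := Complex.continuous_conj
  refine Continuous.div (by fun_prop) ?_ fun x => hermitianSq_ne_zero (hvF x).ne_zero
  unfold hermitianSq
  fun_prop

/-- The point of `S²` with the given horizontal part and height. -/
def spherePoint (ξ : ℂ) (t : ℝ) (h : ξ * conj ξ + (t : ℂ) ^ 2 = 1) : Sphere2 :=
  ⟨!₂[ξ.re, ξ.im, t], by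
    rw [Complex.mul_conj, Complex.normSq_apply] at h
    have hsum : ξ.re * ξ.re + ξ.im * ξ.im + t ^ 2 = 1 := by exact_mod_cast h
    rw [mem_sphere_zero_iff_norm, EuclideanSpace.norm_eq, Real.sqrt_eq_one, Fin.sum_univ_three]
    simpa [sq] using hsum⟩

theorem exists_continuous_isHopfLift {X : Type*} [TopologicalSpace X] {v : X → ℂ × ℂ}
    (hv : Continuous v) (hv₀ : ∀ x, v x ≠ 0) :
    ∃ F : X → Sphere2, Continuous F ∧ ∀ x, IsHopfLift (v x) (F x) := by
  let n (x : X) : ℝ := Complex.normSq (v x).1 + Complex.normSq (v x).2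
  have hn (x : X) : (n x : ℂ) = hermitianSq (v x) := by
    simp only [n, hermitianSq, Complex.ofReal_add, Complex.mul_conj]
  have hn₀ (x : X) : (n x : ℂ) ≠ 0 := hn x ▸ hermitianSq_ne_zero (hv₀ x)
  let ξ (x : X) : ℂ := 2 * conj (v x).1 * (v x).2 / n x
  let t (x : X) : ℝ := (Complex.normSq (v x).1 - Complex.normSq (v x).2) / n x
  have ht (x : X) : (t x : ℂ) =
      ((v x).1 * conj (v x).1 - (v x).2 * conj (v x).2) / n x := by
    simp only [t, Complex.ofReal_div, Complex.ofReal_sub, Complex.mul_conj]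
  have hsphere (x : X) : ξ x * conj (ξ x) + (t x : ℂ) ^ 2 = 1 := by
    simp only [ht, ξ, map_div₀, map_mul, map_ofNat, Complex.conj_conj, Complex.conj_ofReal]
    field_simp [hn₀ x]
    rw [hn, hermitianSq]
    ring
  have hξc : Continuous ξ := by
    have := Complex.continuous_conj
    have := Complex.continuous_normSq
    exact Continuous.div (by fun_prop) (by fun_prop) hn₀
  have htc : Continuous t := by
    have := Complex.continuous_normSq
    exact Continuous.div (by fun_prop) (by fun_prop) fun x => Complex.ofReal_ne_zero.1 (hn₀ x)
  refine ⟨fun x => spherePoint (ξ x) (t x) (hsphere x), ?_, fun x => ⟨hv₀ x, ?_⟩⟩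
  · refine Continuous.subtype_mk ((PiLp.continuous_toLp 2 _).comp (continuous_pi fun i => ?_)) _
    fin_cases i
    exacts [Complex.continuous_re.comp hξc, Complex.continuous_im.comp hξc, htc]
  · have hhor : horizontal (spherePoint (ξ x) (t x) (hsphere x)) = ξ x := rfl
    have hhei : height (spherePoint (ξ x) (t x) (hsphere x)) = t x := rfl
    rw [lineProj_apply, hhor, hhei, ht]
    ext <;> simp only [ξ, map_div₀, map_mul, map_ofNat, Complex.conj_conj, Complex.conj_ofReal] <;>
      field_simp [hn₀ x] <;> rw [hn, hermitianSq] <;> ring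

theorem exists_isHopfLift (y : Sphere2) : ∃ v, IsHopfLift v y := by
  have hlift {v : ℂ × ℂ} (hv : lineProj y v ≠ 0) : ∃ v, IsHopfLift v y :=
    ⟨_, hv, lineProj_lineProj_self y v⟩
  by_contra hnone
  have hzero (v : ℂ × ℂ) : lineProj y v = 0 := not_not.1 (mt hlift hnone)
  have h₁ := congrArg Prod.fst (hzero (1, 0))
  have h₂ := congrArg Prod.snd (hzero (0, 1))
  simp only [lineProj_apply, Prod.fst_zero, Prod.snd_zero] at h₁ h₂
  exact one_ne_zero (by linear_combination h₁ + h₂ : (1 : ℂ) = 0)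

/-! ### Lifting homotopies to Hopf lifts -/

-- Points at distance less than `2` are not antipodal, so the line of one projects isomorphically
-- onto the line of the other.
theorem exists_isHopfLift_of_chain {X : Type*} [TopologicalSpace X] {F : ℕ → X → Sphere2}
    (hF : ∀ j, Continuous (F j)) (hdist : ∀ j x, dist (F j x) (F (j + 1) x) < 2)
    {v₀ : X → ℂ × ℂ} (hv₀ : Continuous v₀) (hv₀F : ∀ x, IsHopfLift (v₀ x) (F 0 x)) (n : ℕ) :
    ∃ v : X → ℂ × ℂ, Continuous v ∧ (∀ x, IsHopfLift (v x) (F n x)) ∧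
      ∀ x, (∀ j, F j x = F 0 x) → v x = v₀ x := by
  induction n with
  | zero => exact ⟨v₀, hv₀, hv₀F, fun _ _ => rfl⟩
  | succ j ih =>
    obtain ⟨v, hv, hvF, hvv₀⟩ := ih
    refine ⟨fun x => lineProj (F (j + 1) x) (v x), continuous_lineProj_apply (hF _) hv,
      fun x => (hvF x).lineProj (hdist j x), fun x hx => ?_⟩
    simp only [hvv₀ x hx, hx, (hv₀F x).lineProj_eq]

theorem exists_isHopfLift_homotopy {X : Type*} [PseudoMetricSpace X] [CompactSpace X]
    {F : I × X → Sphere2} (hF : Continuous F) {v₀ : X → ℂ × ℂ} (hv₀ : Continuous v₀)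
    (hv₀F : ∀ a, IsHopfLift (v₀ a) (F (0, a))) :
    ∃ v : I × X → ℂ × ℂ, Continuous v ∧ (∀ p, IsHopfLift (v p) (F p)) ∧
      (∀ a, v (0, a) = v₀ a) ∧ ∀ a, (∀ x, F (x, a) = F (0, a)) → ∀ x, v (x, a) = v₀ a := by
  obtain ⟨δ, hδ, hFδ⟩ := Metric.uniformContinuous_iff.1
    (CompactSpace.uniformContinuous_of_continuous hF) 2 two_pos
  obtain ⟨N, hN⟩ := exists_nat_one_div_lt hδ
  let τ (j : ℕ) : I := projIcc 0 1 zero_le_one (j / (N + 1 : ℝ))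
  have hτ₀ : τ 0 = 0 := by
    simp only [τ, Nat.cast_zero, zero_div, projIcc_left]
    rfl
  have hτN : τ (N + 1) = 1 := by
    simp only [τ, Nat.cast_succ]
    rw [div_self (by positivity), projIcc_right]
    rfl
  have hτ (j : ℕ) : dist (τ j) (τ (j + 1)) < δ := calc
    dist (τ j) (τ (j + 1)) ≤ |(j / (N + 1 : ℝ)) - ((j + 1 : ℕ) / (N + 1 : ℝ))| :=
      abs_projIcc_sub_projIcc zero_le_one
    _ = 1 / (N + 1 : ℝ) := by
      rw [abs_sub_comm, ← sub_div, Nat.cast_succ, add_sub_cancel_left, abs_of_pos (by positivity)]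
    _ < δ := hN
  have hdist (j : ℕ) (p : I × X) : dist (F (p.1 * τ j, p.2)) (F (p.1 * τ (j + 1), p.2)) < 2 := by
    refine hFδ ((?_ : dist _ _ ≤ _).trans_lt (hτ j))
    rw [Prod.dist_eq, dist_self, max_eq_left dist_nonneg, Subtype.dist_eq, Real.dist_eq,
      Icc.coe_mul, Icc.coe_mul, ← mul_sub, abs_mul, abs_of_nonneg p.1.2.1]
    exact mul_le_of_le_one_left (abs_nonneg _) p.1.2.2
  obtain ⟨v, hv, hvF, hvv₀⟩ := exists_isHopfLift_of_chain
    (F := fun j (p : I × X) => F (p.1 * τ j, p.2)) (fun j => by fun_prop) hdist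
    (v₀ := fun p => v₀ p.2) (by fun_prop) (fun p => by simpa only [hτ₀, mul_zero] using hv₀F p.2)
    (N + 1)
  simp only [hτN, mul_one] at hvF
  refine ⟨v, hv, hvF, fun a => hvv₀ _ fun j => ?_, fun a ha x => hvv₀ _ fun j => ?_⟩
  · simp only [zero_mul]
  · simp only [ha (x * _)]

theorem eq_of_exp_comp_eq {X : Type*} [TopologicalSpace X] [PreconnectedSpace X] {f g : X → ℂ}
    (hf : Continuous f) (hg : Continuous g) (h : ∀ x, Complex.exp (f x) = Complex.exp (g x))
    {x₀ : X} (hx₀ : f x₀ = g x₀) (x : X) : f x = g x :=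
  congrFun (Complex.isCoveringMap_exp.eq_of_comp_eq hf hg
    (funext fun x => Subtype.ext (h x)) x₀ hx₀) x

theorem exists_continuous_log {X : Type*} [TopologicalSpace X] {g : I × X → ℂ} (hg : Continuous g)
    (hg₀ : ∀ p, g p ≠ 0) (hg₁ : ∀ a, g (0, a) = 1) :
    ∃ L : I × X → ℂ, Continuous L ∧ (∀ p, Complex.exp (L p) = g p) ∧ ∀ a, L (0, a) = 0 := by
  let G : C(I × X, {z : ℂ // z ≠ 0}) := ⟨fun p => ⟨g p, hg₀ p⟩, by fun_prop⟩
  have hG (a : X) : G (0, a) = ⟨Complex.exp ((ContinuousMap.const X (0 : ℂ)) a),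
      Complex.exp_ne_zero _⟩ := Subtype.ext ((hg₁ a).trans Complex.exp_zero.symm)
  let L := Complex.isCoveringMap_exp.liftHomotopy G _ hG
  exact ⟨L, L.continuous, fun p => congrArg Subtype.val
    (congrFun (Complex.isCoveringMap_exp.liftHomotopy_lifts G _ hG) p),
    Complex.isCoveringMap_exp.liftHomotopy_zero G _ hG⟩

/-! ### The Hopf degree -/

/-- The map `f` of the square lifts along the Hopf map to a map that is constant with value `w` on
three sides and winds `d` times around the Hopf circle of `w` on the fourth one. For a map that is
constant on the boundary, `d` is its class in `π₂(S²) ≅ ℤ`. -/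
def HasHopfDegree (w : ℂ × ℂ) (f : I × I → Sphere2) (d : ℤ) : Prop :=
  ∃ v : I × I → ℂ × ℂ, Continuous v ∧ (∀ p, IsHopfLift (v p) (f p)) ∧
    (∀ p, p.1 = 0 ∨ p.2 = 0 ∨ p.2 = 1 → v p = w) ∧
    ∀ y : I, v (1, y) = Real.fourierChar (d * y) • w

theorem coe_fourierChar_intCast_mul (d : ℤ) (y : ℝ) :
    (Real.fourierChar (d * y) : ℂ) = Complex.exp (d * (2 * Real.pi * Complex.I) * y) := by
  rw [Real.fourierChar_apply]
  push_cast
  ring_nf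

theorem HasHopfDegree.unique {w : ℂ × ℂ} {f : I × I → Sphere2} {d d' : ℤ} (hw : w ≠ 0)
    (h : HasHopfDegree w f d) (h' : HasHopfDegree w f d') : d = d' := by
  obtain ⟨v, hv, hvf, hvw, hv₁⟩ := h
  obtain ⟨v', hv', hvf', hvw', hv₁'⟩ := h'
  obtain ⟨a, ha, ha₀, hav⟩ := exists_continuous_smul_eq hv hv' hvf hvf'
  have haw (p : I × I) (hp : p.1 = 0 ∨ p.2 = 0 ∨ p.2 = 1) : a p = 1 := by
    refine smul_left_injective ℂ hw ?_
    simpa only [hvw p hp, hvw' p hp, one_smul] using hav p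
  obtain ⟨L, hL, hLa, hL₀⟩ := exists_continuous_log ha ha₀ fun y => haw _ (.inl rfl)
  have hLy {y : I} (hy : y = 0 ∨ y = 1) (x : I) : L (x, y) = 0 :=
    eq_of_exp_comp_eq (f := fun x => L (x, y)) (by fun_prop) continuous_const
      (fun x => by rw [hLa, haw _ (.inr hy), Complex.exp_zero]) (hL₀ y) x
  have hLright (y : I) : L (1, y) = ((d' - d : ℤ) : ℂ) * (2 * Real.pi * Complex.I) * y := by
    refine eq_of_exp_comp_eq (f := fun y => L (1, y))
      (g := fun y : I => ((d' - d : ℤ) : ℂ) * (2 * Real.pi * Complex.I) * y)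
      (by fun_prop) (by fun_prop) (fun y => ?_) (x₀ := 0) (by simp [hLy]) y
    have hay := hav (1, y)
    rw [hv₁, hv₁', Circle.smul_def, Circle.smul_def, smul_smul] at hay
    have hexp := smul_left_injective ℂ hw hay
    rw [coe_fourierChar_intCast_mul, coe_fourierChar_intCast_mul] at hexp
    rw [hLa, eq_div_of_mul_eq (Complex.exp_ne_zero _) hexp, ← Complex.exp_sub]
    push_cast
    ring_nf
  have hzero := hLright 1
  rw [hLy (.inr rfl) 1, Icc.coe_one, Complex.ofReal_one, mul_one, eq_comm,
    mul_eq_zero_iff_right Complex.two_pi_I_ne_zero, Int.cast_eq_zero] at hzero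
  omega

theorem exists_hasHopfDegree_of_homotopy {w : ℂ × ℂ} {c : Sphere2} (hw : IsHopfLift w c)
    {H : I × (I × I) → Sphere2} (hH : Continuous H)
    (hboundary : ∀ s p, p.1 = 0 ∨ p.1 = 1 ∨ p.2 = 0 ∨ p.2 = 1 → H (s, p) = c) :
    ∃ d, ∀ s, HasHopfDegree w (fun p => H (s, p)) d := by
  obtain ⟨v, hv, hvH, hv₀, hvw⟩ := exists_isHopfLift_homotopy (X := I × I)
    (F := fun q => H (q.2.1, (q.1, q.2.2))) (by fun_prop) (v₀ := fun _ => w) continuous_const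
    fun a => by rwa [hboundary _ _ (.inl rfl)]
  have hvy (s x : I) {y : I} (hy : y = 0 ∨ y = 1) : v (x, s, y) = w := by
    refine hvw _ (fun t => ?_) x
    rw [hboundary _ _ (.inr (.inr hy)), hboundary _ _ (.inr (.inr hy))]
  obtain ⟨a, ha, ha₀, hav⟩ := exists_continuous_smul_eq (X := I × I) (F := fun _ => c)
    (v := fun _ => w) (w := fun q => v (1, q.2, q.1)) continuous_const (by fun_prop)
    (fun _ => hw) fun q => by
      have hlift := hvH (1, q.2, q.1)
      rwa [hboundary _ _ (.inr (.inl rfl))] at hlift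
  have hay (s : I) {y : I} (hy : y = 0 ∨ y = 1) : a (y, s) = 1 := by
    refine smul_left_injective ℂ hw.ne_zero ?_
    simpa only [hvy s 1 hy, one_smul] using hav (y, s)
  obtain ⟨L, hL, hLa, hL₀⟩ := exists_continuous_log ha ha₀ fun s => hay s (.inl rfl)
  have hL₁ (s : I) : L (1, s) = L (1, 0) :=
    eq_of_exp_comp_eq (f := fun s => L (1, s)) (by fun_prop) continuous_const
      (fun s => by rw [hLa, hLa, hay _ (.inr rfl), hay _ (.inr rfl)]) (x₀ := 0) rfl s
  obtain ⟨d, hd⟩ := Complex.exp_eq_one_iff.1 ((hLa (1, 0)).trans (hay 0 (.inr rfl)))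
  refine ⟨d, fun s => ⟨fun p => Complex.exp (p.1 * (L (1, 0) * p.2 - L (p.2, s))) • v (p.1, s, p.2),
    by fun_prop, fun p => (hvH (p.1, s, p.2)).smul (Complex.exp_ne_zero _), ?_, fun y => ?_⟩⟩
  · rintro ⟨x, y⟩ (rfl | rfl | rfl)
    · simp [hv₀]
    · simp [hvy s x (.inl rfl), hL₀]
    · simp [hvy s x (.inr rfl), hL₁ s]
  · simp only [← hav (y, s), Icc.coe_one, Complex.ofReal_one, one_mul, smul_smul]
    rw [Circle.smul_def, coe_fourierChar_intCast_mul, ← hd, Complex.exp_sub, hLa,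
      div_mul_cancel₀ _ (ha₀ _)]

/-- Two maps of the square side by side, as in the multiplication of `π₂` along its first axis. -/
def juxtapose {Y : Type*} (f g : I × I → Y) (p : I × I) : Y :=
  if (p.1 : ℝ) ≤ 1 / 2 then f (projIcc 0 1 zero_le_one (2 * p.1), p.2)
  else g (projIcc 0 1 zero_le_one (2 * p.1 - 1), p.2)

theorem continuous_juxtapose {Y : Type*} [TopologicalSpace Y] {f g : I × I → Y}
    (hf : Continuous f) (hg : Continuous g) (h : ∀ y, f (1, y) = g (0, y)) :
    Continuous (juxtapose f g) := by
  refine Continuous.if_le (by fun_prop) (by fun_prop) (by fun_prop) (by fun_prop) fun p hp => ?_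
  rw [hp, mul_one_div_cancel two_ne_zero, sub_self, projIcc_left, projIcc_right]
  exact h p.2

theorem juxtapose_zero {Y : Type*} (f g : I × I → Y) (y : I) :
    juxtapose f g (0, y) = f (0, y) := by
  simp [juxtapose]

theorem juxtapose_one {Y : Type*} (f g : I × I → Y) (y : I) :
    juxtapose f g (1, y) = g (1, y) := by
  simp only [juxtapose, Icc.coe_one]
  rw [if_neg (by norm_num), show (2 : ℝ) * 1 - 1 = 1 by norm_num, projIcc_right]
  rfl

theorem HasHopfDegree.juxtapose {w : ℂ × ℂ} {f g : I × I → Sphere2} {d d' : ℤ}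
    (hf : HasHopfDegree w f d) (hg : HasHopfDegree w g d') :
    HasHopfDegree w (juxtapose f g) (d + d') := by
  obtain ⟨v, hv, hvf, hvw, hv₁⟩ := hf
  obtain ⟨v', hv', hvg, hvw', hv₁'⟩ := hg
  have := Real.continuous_fourierChar
  refine ⟨SmallFibers.juxtapose v fun p => Real.fourierChar (d * p.2) • v' p,
    continuous_juxtapose hv (by fun_prop) fun y => ?_, fun p => ?_, ?_, fun y => ?_⟩
  · rw [hv₁, hvw' _ (.inl rfl)]
  · simp only [SmallFibers.juxtapose]
    split_ifs
    · exact hvf _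
    · rw [Circle.smul_def]
      exact (hvg _).smul (Circle.coe_ne_zero _)
  · rintro ⟨x, y⟩ (rfl | hy)
    · rw [juxtapose_zero, hvw _ (.inl rfl)]
    · have hy' : Real.fourierChar (d * y) = 1 := by
        rcases hy with rfl | rfl
        · simp
        · simp [fourierChar_intCast]
      simp only [SmallFibers.juxtapose, hy', one_smul]
      split_ifs
      exacts [hvw _ (.inr hy), hvw' _ (.inr hy)]
  · simp only [juxtapose_one, hv₁', Int.cast_add, add_mul, AddChar.map_add_eq_mul, mul_smul]

/-! ### The Hopf degree on the second homotopy group -/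

/-- A loop in the sense of `π₂`, as a map of the square `I × I`. -/
def square {Y : Type*} [TopologicalSpace Y] {c : Y} (p : GenLoop (Fin 2) Y c) (q : I × I) : Y :=
  p ![q.1, q.2]

/-- The class in `π₂` of a loop, typed as an element of the group `HomotopyGroup` rather than of
the underlying quotient. -/
def homotopyClass {Y : Type*} [TopologicalSpace Y] {c : Y} (p : GenLoop (Fin 2) Y c) :
    HomotopyGroup (Fin 2) Y c :=
  ⟦p⟧

section Square

variable {Y : Type*} [TopologicalSpace Y] {c : Y}

theorem mem_boundary_fin_two_iff {x : Fin 2 → I} :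
    x ∈ Cube.boundary (Fin 2) ↔ x 0 = 0 ∨ x 0 = 1 ∨ x 1 = 0 ∨ x 1 = 1 := by
  simp only [Cube.boundary, mem_ofPred_eq, Fin.exists_fin_two, or_assoc]

theorem continuous_vecCons_fin_two : Continuous fun q : I × I => ![q.1, q.2] :=
  continuous_pi fun i => by fin_cases i; exacts [continuous_fst, continuous_snd]

theorem square_transAt (p q : GenLoop (Fin 2) Y c) :
    square (GenLoop.transAt 0 p q) = juxtapose (square p) (square q) := by
  funext ⟨x, y⟩
  have hupdate (z : I) : Function.update ![x, y] 0 z = ![z, y] := by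
    funext i
    fin_cases i <;> simp
  change (if (x : ℝ) ≤ 1 / 2 then p (Function.update ![x, y] 0 _)
    else q (Function.update ![x, y] 0 _)) = _
  rw [hupdate, hupdate]
  rfl

end Square

section HopfDegree

variable {w : ℂ × ℂ} {c : Sphere2}

theorem exists_hasHopfDegree_of_homotopic (hw : IsHopfLift w c) {p q : GenLoop (Fin 2) Sphere2 c}
    (h : GenLoop.Homotopic p q) :
    ∃ d, HasHopfDegree w (square p) d ∧ HasHopfDegree w (square q) d := by
  obtain ⟨H⟩ := h
  obtain ⟨d, hd⟩ := exists_hasHopfDegree_of_homotopy hw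
    (H := fun r => H (r.1, ![r.2.1, r.2.2]))
    (H.continuous.comp (continuous_fst.prodMk (continuous_vecCons_fin_two.comp continuous_snd)))
    fun s r hr => by
      have hboundary : ![r.1, r.2] ∈ Cube.boundary (Fin 2) := mem_boundary_fin_two_iff.2 hr
      exact (H.eq_fst s hboundary).trans (p.2 _ hboundary)
  refine ⟨d, ?_, ?_⟩
  · convert hd 0 using 1
    exact funext fun r => (H.apply_zero _).symm
  · convert hd 1 using 1
    exact funext fun r => (H.apply_one _).symm

theorem exists_monoidHom_hasHopfDegree (hw : IsHopfLift w c) :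
    ∃ D : HomotopyGroup (Fin 2) Sphere2 c →* Multiplicative ℤ,
      ∀ p : GenLoop (Fin 2) Sphere2 c, HasHopfDegree w (square p) (D (homotopyClass p)).toAdd := by
  have hexists (g : HomotopyGroup (Fin 2) Sphere2 c) :
      ∃ d : ℤ, ∀ p, homotopyClass p = g → HasHopfDegree w (square p) d := by
    induction g using Quotient.inductionOn with | _ q
    obtain ⟨d, hd, -⟩ := exists_hasHopfDegree_of_homotopic hw (GenLoop.Homotopic.refl q)
    refine ⟨d, fun p hp => ?_⟩
    obtain ⟨d', hp', hq'⟩ := exists_hasHopfDegree_of_homotopic hw (Quotient.exact hp)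
    rwa [hd.unique hw.ne_zero hq']
  choose D hD using hexists
  refine ⟨MonoidHom.mk' (fun g => Multiplicative.ofAdd (D g)) fun g g' => ?_, fun p => hD _ p rfl⟩
  induction g using Quotient.inductionOn with | _ p
  induction g' using Quotient.inductionOn with | _ q
  have hmul := hD _ (GenLoop.transAt 0 q p) (HomotopyGroup.mul_spec (i := (0 : Fin 2))).symm
  rw [square_transAt] at hmul
  rw [← ofAdd_add, add_comm]
  exact congrArg Multiplicative.ofAdd
    (hmul.unique hw.ne_zero ((hD _ q rfl).juxtapose (hD _ p rfl)))

end HopfDegree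

/-! ### A loop of degree one -/

/-- The point that divides the chord from `1` to `e^{2πiy}` in the ratio `x : 1 - x`. It maps the
interior of the square injectively into the unit disc, and the boundary to the unit circle. -/
def chordPoint (p : I × I) : ℂ := 1 + p.1 * ((Real.fourierChar p.2 : ℂ) - 1)

theorem continuous_chordPoint : Continuous chordPoint := by
  have := Real.continuous_fourierChar
  unfold chordPoint
  fun_prop

theorem chordPoint_eq_one {p : I × I} (hp : p.1 = 0 ∨ p.2 = 0 ∨ p.2 = 1) : chordPoint p = 1 := by
  have hone : (Real.fourierChar 1 : ℂ) = 1 := by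
    rw [← Int.cast_one, fourierChar_intCast, Circle.coe_one]
  rcases hp with h | h | h <;> simp [chordPoint, h, hone]

theorem chordPoint_one_left (y : I) : chordPoint (1, y) = Real.fourierChar y := by
  simp [chordPoint]

theorem norm_chordPoint_le_one (p : I × I) : ‖chordPoint p‖ ≤ 1 := by
  have hmem := (convex_closedBall (0 : ℂ) 1).add_smul_sub_mem
    (x := 1) (y := Real.fourierChar p.2) (by simp)
    (mem_closedBall_zero_iff.2 (Circle.norm_coe _).le) p.1.2
  simpa [chordPoint] using hmem

theorem norm_chordPoint_of_boundary {p : I × I} (hp : p.1 = 0 ∨ p.1 = 1 ∨ p.2 = 0 ∨ p.2 = 1) :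
    ‖chordPoint p‖ = 1 := by
  rcases hp with h | h | h
  · rw [chordPoint_eq_one (.inl h), norm_one]
  · rw [← Prod.mk.eta (p := p), h, chordPoint_one_left, Circle.norm_coe]
  · rw [chordPoint_eq_one (.inr h), norm_one]

theorem norm_sq_chordPoint_sub_one (p : I × I) :
    ‖chordPoint p - 1‖ ^ 2 = -2 * p.1 * (chordPoint p - 1).re := by
  have hcircle := Circle.normSq_coe (Real.fourierChar p.2)
  rw [Complex.normSq_apply] at hcircle
  rw [← Complex.normSq_eq_norm_sq, chordPoint, add_sub_cancel_left, map_mul,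
    Complex.normSq_ofReal, Complex.re_ofReal_mul, Complex.normSq_apply]
  simp only [Complex.sub_re, Complex.one_re, Complex.sub_im, Complex.one_im]
  linear_combination (p.1 : ℝ) ^ 2 * hcircle

theorem injOn_fourierChar_Ioo : InjOn Real.fourierChar (Ioo 0 1) := by
  intro y hy y' hy' h
  have hexp := congrArg (Subtype.val : Circle → ℂ) h
  rw [Real.fourierChar_apply, Real.fourierChar_apply, Complex.exp_eq_exp_iff_exists_int] at hexp
  obtain ⟨n, hn⟩ := hexp
  have hyn : y = y' + n := by
    refine Complex.ofReal_injective (mul_left_cancel₀ Complex.two_pi_I_ne_zero ?_)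
    push_cast at hn ⊢
    linear_combination hn
  have hn₀ : n = 0 := by
    have hlt : (n : ℝ) < 1 := by linarith [hy.2, hy'.1]
    have hgt : (-1 : ℝ) < n := by linarith [hy.1, hy'.2]
    have hlt' : n < 1 := by exact_mod_cast hlt
    have hgt' : -1 < n := by exact_mod_cast hgt
    omega
  rw [hyn, hn₀, Int.cast_zero, add_zero]

theorem injOn_chordPoint : InjOn chordPoint {p | ‖chordPoint p‖ ≠ 1} := by
  intro p hp q hq h
  have hinterior {p : I × I} (hp : ‖chordPoint p‖ ≠ 1) : (p.2 : ℝ) ∈ Ioo 0 1 := by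
    refine ⟨unitInterval.pos_iff_ne_zero.2 fun hy => ?_,
      unitInterval.lt_one_iff_ne_one.2 fun hy => ?_⟩
    exacts [hp (norm_chordPoint_of_boundary (.inr (.inr (.inl hy)))),
      hp (norm_chordPoint_of_boundary (.inr (.inr (.inr hy))))]
  have hne : chordPoint p - 1 ≠ 0 := fun h₁ => hp (by rw [sub_eq_zero.1 h₁, norm_one])
  have hre : (chordPoint p - 1).re ≠ 0 := fun hre => hne <| by
    have hsq := norm_sq_chordPoint_sub_one p
    rwa [hre, mul_zero, sq_eq_zero_iff, norm_eq_zero] at hsq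
  have hfst : (p.1 : ℝ) = q.1 := by
    have hsq := (norm_sq_chordPoint_sub_one p).symm.trans
      ((congrArg (fun z : ℂ => ‖z - 1‖ ^ 2) h).trans (norm_sq_chordPoint_sub_one q))
    rw [← h] at hsq
    linarith [mul_right_cancel₀ hre hsq]
  have hsnd : Real.fourierChar p.2 = Real.fourierChar q.2 := by
    have hmul : chordPoint p - 1 = chordPoint q - 1 := by rw [h]
    simp only [chordPoint, add_sub_cancel_left, ← hfst] at hmul hne
    exact Circle.ext (sub_left_injective (mul_left_cancel₀ (left_ne_zero_of_mul hne) hmul))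
  exact Prod.ext (Subtype.ext hfst)
    (Subtype.ext (injOn_fourierChar_Ioo (hinterior hp) (hinterior hq) hsnd))

theorem exists_det_eq_one {w : ℂ × ℂ} (hw : w ≠ 0) : ∃ w', det w w' = 1 := by
  refine ⟨(-(starRingEnd ℂ) w.2 / hermitianSq w, (starRingEnd ℂ) w.1 / hermitianSq w), ?_⟩
  have hne := hermitianSq_ne_zero hw
  rw [det]
  field_simp
  rw [hermitianSq]
  ring

theorem eq_of_mul_one_sub_norm_eq {A B : ℂ} (hA : ‖A‖ ≤ 1) (hB : ‖B‖ ≤ 1) (hA₁ : ‖A‖ ≠ 1)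
    (h : A * (1 - ‖B‖) = (1 - ‖A‖) * B) : A = B := by
  have hnorm : ‖A‖ * (1 - ‖B‖) = (1 - ‖A‖) * ‖B‖ := by
    have hcongr := congrArg norm h
    rwa [norm_mul, norm_mul, ← Complex.ofReal_one, ← Complex.ofReal_sub, ← Complex.ofReal_sub,
      Complex.norm_real, Complex.norm_real, Real.norm_of_nonneg (sub_nonneg.2 hA),
      Real.norm_of_nonneg (sub_nonneg.2 hB)] at hcongr
  have heq : ‖A‖ = ‖B‖ := by linarith
  have hne : (1 - ‖A‖ : ℂ) ≠ 0 := by exact_mod_cast sub_ne_zero.2 hA₁.symm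
  rw [← heq, mul_comm] at h
  exact mul_left_cancel₀ hne h

/-- The lift of a loop of degree one: in the frame `w`, `w'` it has the coordinates `A` and
`1 - ‖A‖`, for the chord point `A`. -/
def standardLift (w w' : ℂ × ℂ) (p : I × I) : ℂ × ℂ :=
  chordPoint p • w + (1 - ‖chordPoint p‖ : ℂ) • w'

theorem det_standardLift {w w' : ℂ × ℂ} (hdet : det w w' = 1) (p q : I × I) :
    det (standardLift w w' p) (standardLift w w' q) =
      chordPoint p * (1 - ‖chordPoint q‖) - (1 - ‖chordPoint p‖) * chordPoint q := by
  simp only [det, standardLift, Prod.fst_add, Prod.snd_add, Prod.smul_fst, Prod.smul_snd,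
    smul_eq_mul] at hdet ⊢
  linear_combination (chordPoint p * (1 - ‖chordPoint q‖) -
    (1 - ‖chordPoint p‖) * chordPoint q) * hdet

theorem standardLift_of_norm_eq_one (w w' : ℂ × ℂ) {p : I × I} (hp : ‖chordPoint p‖ = 1) :
    standardLift w w' p = chordPoint p • w := by
  rw [standardLift, hp, Complex.ofReal_one, sub_self, zero_smul, add_zero]

theorem standardLift_ne_zero {w w' : ℂ × ℂ} (hdet : det w w' = 1) (p : I × I) :
    standardLift w w' p ≠ 0 := by
  intro hzero
  have hdetw : det w (standardLift w w' p) = 1 - ‖chordPoint p‖ := by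
    simp only [det, standardLift, Prod.fst_add, Prod.snd_add, Prod.smul_fst, Prod.smul_snd,
      smul_eq_mul] at hdet ⊢
    linear_combination (1 - ‖chordPoint p‖ : ℂ) * hdet
  have hnorm : ‖chordPoint p‖ = 1 := by
    rw [hzero, show det w 0 = 0 by simp [det], eq_comm, sub_eq_zero] at hdetw
    exact_mod_cast hdetw.symm
  have hw : w ≠ 0 := fun h => by simp [det, h] at hdet
  rw [standardLift_of_norm_eq_one _ _ hnorm] at hzero
  exact smul_ne_zero (norm_ne_zero_iff.1 (hnorm ▸ one_ne_zero)) hw hzero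

theorem exists_genLoop_hasHopfDegree_one {w : ℂ × ℂ} {c : Sphere2} (hw : IsHopfLift w c) :
    ∃ γ : GenLoop (Fin 2) Sphere2 c,
      HasHopfDegree w (square γ) 1 ∧ InjOn (square γ) (square γ ⁻¹' {c})ᶜ := by
  obtain ⟨w', hdet⟩ := exists_det_eq_one hw.ne_zero
  have hv : Continuous (standardLift w w') := by
    have := continuous_chordPoint
    unfold standardLift
    fun_prop
  obtain ⟨F, hF, hvF⟩ := exists_continuous_isHopfLift hv (standardLift_ne_zero hdet)
  have hFc {p : I × I} (hp : ‖chordPoint p‖ = 1) : F p = c := by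
    refine (hvF p).unique ?_
    rw [standardLift_of_norm_eq_one _ _ hp]
    exact hw.smul (norm_ne_zero_iff.1 (hp ▸ one_ne_zero))
  let γ : GenLoop (Fin 2) Sphere2 c := ⟨⟨fun x => F (x 0, x 1), by fun_prop⟩, fun x hx =>
    hFc (norm_chordPoint_of_boundary (mem_boundary_fin_two_iff.1 hx))⟩
  refine ⟨γ, ⟨standardLift w w', hv, hvF, fun p hp => ?_, fun y => ?_⟩, fun p hp q hq hpq => ?_⟩
  · have hone := chordPoint_eq_one hp
    rw [standardLift_of_norm_eq_one _ _ (by rw [hone, norm_one]), hone, one_smul]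
  · rw [standardLift_of_norm_eq_one _ _ (norm_chordPoint_of_boundary (.inr (.inl rfl))),
      chordPoint_one_left, Int.cast_one, one_mul, Circle.smul_def]
  · have hzero := ((hvF p).eq_iff_det_eq_zero (hvF q)).1 hpq
    rw [det_standardLift hdet, sub_eq_zero] at hzero
    exact injOn_chordPoint (fun h => hp (hFc h)) (fun h => hq (hFc h))
      (eq_of_mul_one_sub_norm_eq (norm_chordPoint_le_one p) (norm_chordPoint_le_one q)
        (fun h => hp (hFc h)) hzero)

/-! ### Counting preimages of finite sets -/

/-- The coordinate `z` of the line spanned by `z • a + a'`, for a frame `a`, `a'` with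
determinant one; the line spanned by `a` is at infinity. -/
def slope (a a' v : ℂ × ℂ) : ℂ := det v a' / det a v

theorem slope_eq_slope_iff {a a' v w : ℂ × ℂ} (ha : det a a' = 1) (hv : det a v ≠ 0)
    (hw : det a w ≠ 0) : slope a a' v = slope a a' w ↔ det v w = 0 := by
  have hplucker : det v w = det v a' * det a w - det w a' * det a v := by
    unfold det at ha ⊢
    linear_combination -(v.1 * w.2 - v.2 * w.1) * ha
  rw [slope, slope, div_eq_div_iff hv hw, hplucker, sub_eq_zero]

/-- The linear map to `ℂ²` with the coordinates `c * det v a'` and `det a v`. -/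
def frameMap (a a' : ℂ × ℂ) (c : ℂ) : (ℂ × ℂ) →ₗ[ℂ] (ℂ × ℂ) where
  toFun v := (c * det v a', det a v)
  map_add' v w := by ext <;> simp only [det, Prod.fst_add, Prod.snd_add] <;> ring
  map_smul' b v := by
    ext <;> simp only [det, Prod.smul_fst, Prod.smul_snd, smul_eq_mul, RingHom.id_apply] <;> ring

theorem frameMap_apply (a a' : ℂ × ℂ) (c : ℂ) (v : ℂ × ℂ) :
    frameMap a a' c v = (c * det v a', det a v) :=
  rfl

theorem frameMap_injective {a a' : ℂ × ℂ} {c : ℂ} (ha : det a a' = 1) (hc : c ≠ 0) :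
    Function.Injective (frameMap a a' c) := by
  refine (injective_iff_map_eq_zero _).2 fun v hv => ?_
  obtain ⟨h₁, h₂⟩ := Prod.ext_iff.1 hv
  simp only [frameMap_apply, Prod.fst_zero, Prod.snd_zero, mul_eq_zero, hc, false_or] at h₁ h₂
  unfold det at ha h₁ h₂
  ext
  · rw [Prod.fst_zero]
    linear_combination a.1 * h₁ + a'.1 * h₂ - v.1 * ha
  · rw [Prod.snd_zero]
    linear_combination a.2 * h₁ + a'.2 * h₂ - v.2 * ha

theorem exists_injOn_re_const_mul {Z : Set ℂ} (hZ : Z.Finite) :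
    ∃ c : ℂ, c ≠ 0 ∧ InjOn (fun z => (c * z).re) Z := by
  obtain ⟨s, -, hs⟩ := exists_injOn_fst_add_mul_snd (hZ.image Complex.equivRealProd)
  refine ⟨1 - s * Complex.I, fun h => ?_, fun z hz z' hz' h => ?_⟩
  · simpa using congrArg Complex.re h
  · refine Complex.equivRealProd.injective (hs (mem_image_of_mem _ hz) (mem_image_of_mem _ hz') ?_)
    simpa [sub_mul] using h

theorem exists_linearMap_mem_pencil_iff {P : Finset Sphere2} {m : ℕ} (hP : P.card = m + 2) :
    ∃ (φ : (ℂ × ℂ) →ₗ[ℂ] (ℂ × ℂ)) (Z : Finset ℂ), Function.Injective φ ∧ Z.card = m + 1 ∧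
      InjOn Complex.re (Z : Set ℂ) ∧ ∀ v y, IsHopfLift v y → (φ v ∈ pencil Z ↔ y ∈ P) := by
  classical
  obtain ⟨p₀, hp₀⟩ : P.Nonempty := Finset.card_pos.1 (by omega)
  choose ℓ hℓ using exists_isHopfLift
  obtain ⟨a', ha⟩ := exists_det_eq_one (hℓ p₀).ne_zero
  have hinfty {v : ℂ × ℂ} {y : Sphere2} (hv : IsHopfLift v y) : det (ℓ p₀) v = 0 ↔ y = p₀ :=
    ((hℓ p₀).eq_iff_det_eq_zero hv).symm.trans eq_comm
  have hslope {v w : ℂ × ℂ} {y z : Sphere2} (hv : IsHopfLift v y) (hw : IsHopfLift w z)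
      (hy : y ≠ p₀) (hz : z ≠ p₀) : slope (ℓ p₀) a' v = slope (ℓ p₀) a' w ↔ y = z :=
    (slope_eq_slope_iff ha (mt (hinfty hv).1 hy) (mt (hinfty hw).1 hz)).trans
      (hv.eq_iff_det_eq_zero hw).symm
  let Z₀ : Finset ℂ := (P.erase p₀).image fun y => slope (ℓ p₀) a' (ℓ y)
  have hZ₀ : Z₀.card = m + 1 := by
    have hinj : InjOn (fun y => slope (ℓ p₀) a' (ℓ y)) (P.erase p₀) := fun y hy z hz h =>
      (hslope (hℓ y) (hℓ z) (Finset.ne_of_mem_erase hy) (Finset.ne_of_mem_erase hz)).1 h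
    rw [Finset.card_image_of_injOn hinj, Finset.card_erase_of_mem hp₀, hP, Nat.add_succ_sub_one]
  obtain ⟨c, hc, hcre⟩ := exists_injOn_re_const_mul Z₀.finite_toSet
  refine ⟨frameMap (ℓ p₀) a' c, Z₀.image (c * ·), frameMap_injective ha hc, ?_, ?_,
    fun v y hv => ?_⟩
  · rw [Finset.card_image_of_injective _ (mul_right_injective₀ hc), hZ₀]
  · rw [Finset.coe_image]
    exact InjOn.image_of_comp hcre
  · have hmem (hy : y ≠ p₀) : slope (ℓ p₀) a' v ∈ Z₀ ↔ y ∈ P := by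
      simp only [Z₀, Finset.mem_image, Finset.mem_erase]
      refine ⟨fun ⟨z, hz, h⟩ => (hslope (hℓ z) hv hz.1 hy).1 h ▸ hz.2,
        fun h => ⟨y, ⟨hy, h⟩, (hslope (hℓ y) hv hy hy).2 rfl⟩⟩
    rw [pencil, mem_ofPred_eq, frameMap_apply, mul_div_assoc,
      (mul_right_injective₀ hc).mem_finset_image, hinfty hv]
    by_cases hy : y = p₀
    · simp only [hy, hp₀, true_or]
    · simpa only [hy, false_or, slope] using hmem hy

/-- The inclusion of the square into the plane. -/
def toPlane (q : I × I) : ℝ × ℝ := (q.1, q.2)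

/-- The retraction of the plane onto the square. -/
def toSquare (p : ℝ × ℝ) : I × I := (projIcc 0 1 zero_le_one p.1, projIcc 0 1 zero_le_one p.2)

theorem toSquare_toPlane (q : I × I) : toSquare (toPlane q) = q :=
  Prod.ext (projIcc_val zero_le_one _) (projIcc_val zero_le_one _)

theorem projIcc_unitInterval_eq_zero_or_one {x : ℝ} (hx : x ∉ Ioo 0 1) :
    projIcc (0 : ℝ) 1 zero_le_one x = 0 ∨ projIcc (0 : ℝ) 1 zero_le_one x = 1 := by
  rcases le_or_gt x 0 with h₀ | h₀
  · exact .inl (projIcc_of_le_left _ h₀)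
  · exact .inr (projIcc_of_right_le _ (not_lt.1 fun h₁ => hx ⟨h₀, h₁⟩))

theorem toPlane_toSquare_or_boundary (p : ℝ × ℝ) : toPlane (toSquare p) = p ∨
    (toSquare p).1 = 0 ∨ (toSquare p).1 = 1 ∨ (toSquare p).2 = 0 ∨ (toSquare p).2 = 1 := by
  by_cases h₁ : p.1 ∈ Ioo 0 1
  · by_cases h₂ : p.2 ∈ Ioo 0 1
    · exact .inl (Prod.ext
        (congrArg Subtype.val (projIcc_of_mem zero_le_one (Ioo_subset_Icc_self h₁)))
        (congrArg Subtype.val (projIcc_of_mem zero_le_one (Ioo_subset_Icc_self h₂))))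
    · exact .inr (.inr (.inr (projIcc_unitInterval_eq_zero_or_one h₂)))
  · exact .inr (or_assoc.1 (.inl (projIcc_unitInterval_eq_zero_or_one h₁)))

theorem HasHopfDegree.eq_of_boundary {w : ℂ × ℂ} {f : I × I → Sphere2} {d : ℤ}
    (h : HasHopfDegree w f d) {c : Sphere2} (hw : IsHopfLift w c) {q : I × I}
    (hq : q.1 = 0 ∨ q.1 = 1 ∨ q.2 = 0 ∨ q.2 = 1) : f q = c := by
  obtain ⟨v, -, hvf, hvw, hv₁⟩ := h
  suffices hlift : IsHopfLift (v q) c from (hvf q).unique hlift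
  rcases hq with h | h | h
  · rwa [hvw q (.inl h)]
  · rw [← Prod.mk.eta (p := q), h, hv₁, Circle.smul_def]
    exact hw.smul (Circle.coe_ne_zero _)
  · rwa [hvw q (.inr h)]

theorem HasHopfDegree.abs_mul_le_ncard {w : ℂ × ℂ} {f : I × I → Sphere2} {d : ℤ}
    (h : HasHopfDegree w f d) {c : Sphere2} (hw : IsHopfLift w c) {P : Finset Sphere2} {m : ℕ}
    (hP : P.card = m + 2) (hc : c ∉ P) (hfin : (f ⁻¹' P).Finite) :
    |d| * m ≤ (f ⁻¹' P).ncard := by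
  classical
  have hfc {q : I × I} := h.eq_of_boundary hw (q := q)
  obtain ⟨v, hv, hvf, hvw, hv₁⟩ := h
  obtain ⟨φ, Z, hφ, hZcard, hZre, hφZ⟩ := exists_linearMap_mem_pencil_iff hP
  let V (p : ℝ × ℝ) : ℂ × ℂ := φ (v (toSquare p))
  have hV : Continuous V := by
    have := φ.continuous_of_finiteDimensional
    unfold V toSquare
    fun_prop
  have hleft (p : ℝ × ℝ) (hp : p.1 ≤ 0) : V p = φ w :=
    congrArg φ (hvw _ (.inl (projIcc_of_le_left zero_le_one hp)))
  have hside (p : ℝ × ℝ) (hp : p.2 ∉ Ioo 0 1) : V p = φ w :=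
    congrArg φ (hvw _ (.inr (projIcc_unitInterval_eq_zero_or_one hp)))
  have hright (p : ℝ × ℝ) (hp₁ : 1 ≤ p.1) (hp₂ : p.2 ∈ Icc 0 1) :
      V p = Real.fourierChar (d * p.2) • φ w := by
    have hp : toSquare p = (1, ⟨p.2, hp₂⟩) :=
      Prod.ext (projIcc_of_right_le zero_le_one hp₁) (projIcc_of_mem zero_le_one hp₂)
    simp only [V, hp, hv₁, Circle.smul_def, map_smul]
  have hQ (p : ℝ × ℝ) : p ∈ hfin.toFinset.image toPlane ↔ V p ∈ pencil Z := by
    rw [hφZ _ _ (hvf _), Finset.mem_image]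
    constructor
    · rintro ⟨q, hq, rfl⟩
      rwa [toSquare_toPlane, ← Finset.mem_coe, ← mem_preimage, ← hfin.mem_toFinset]
    · refine fun hp => ⟨toSquare p, hfin.mem_toFinset.2 hp, ?_⟩
      exact (toPlane_toSquare_or_boundary p).resolve_right fun hb => hc (hfc hb ▸ hp)
  have hbound := abs_mul_le_card_of_mem_pencil_iff hZre hZcard hV
    (fun p => (map_ne_zero_iff φ hφ).2 (hvf _).ne_zero) (mt (hφZ w c hw).1 hc) hside hleft hright hQ
  rwa [Finset.card_image_of_injective _ (Function.LeftInverse.injective toSquare_toPlane),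
    ← ncard_eq_toFinset_card _ hfin] at hbound

/-! ### Small fibers -/

theorem injective_of_mulEquiv_int {G : Type*} [Group G] (e : G ≃* Multiplicative ℤ)
    {D : G →* Multiplicative ℤ} {g : G} (hg : (D g).toAdd ≠ 0) : Function.Injective D := by
  refine (injective_iff_map_eq_one D).2 fun β hβ => e.map_eq_one_iff.1 ?_
  have hpow : g ^ (e β).toAdd = β ^ (e g).toAdd := by
    refine e.injective (Multiplicative.toAdd.injective ?_)
    simp only [map_zpow, toAdd_zpow, smul_eq_mul, mul_comm]
  have hmul : (e β).toAdd * (D g).toAdd = 0 := by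
    simpa only [map_zpow, toAdd_zpow, hβ, toAdd_one, smul_eq_mul, mul_zero] using
      congrArg (fun x => (D x).toAdd) hpow
  exact Multiplicative.toAdd.injective ((mul_eq_zero.1 hmul).resolve_right hg)

theorem exists_hasHopfDegree_comp {ρ : C(Sphere2, Sphere2)} {k : ℤ} (hdeg : HasDegree ρ k) :
    ∃ (b : Sphere2) (γ : GenLoop (Fin 2) Sphere2 b) (w : ℂ × ℂ) (d : ℤ),
      InjOn (square γ) (square γ ⁻¹' {b})ᶜ ∧ IsHopfLift w (ρ b) ∧ |k| ≤ |d| ∧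
        HasHopfDegree w (ρ ∘ square γ) d := by
  obtain ⟨b, e, e', hρ⟩ := hdeg
  obtain ⟨u, hu⟩ := exists_isHopfLift b
  obtain ⟨w, hw⟩ := exists_isHopfLift (ρ b)
  obtain ⟨D, hD⟩ := exists_monoidHom_hasHopfDegree hu
  obtain ⟨D', hD'⟩ := exists_monoidHom_hasHopfDegree hw
  obtain ⟨γ, hγ, hinj⟩ := exists_genLoop_hasHopfDegree_one hu
  obtain ⟨γ', hγ', -⟩ := exists_genLoop_hasHopfDegree_one hw
  have hDγ : (D (homotopyClass γ)).toAdd = 1 := (hD γ).unique hu.ne_zero hγ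
  have hDγ' : (D' (homotopyClass γ')).toAdd = 1 := (hD' γ').unique hw.ne_zero hγ'
  have hinjD' : Function.Injective D' := injective_of_mulEquiv_int e' (hDγ'.trans_ne one_ne_zero)
  let β := e'.symm (e (homotopyClass γ))
  have hpush : piTwoMap ρ b (homotopyClass γ) = β ^ k := e'.injective <| by
    rw [hρ, map_zpow, e'.apply_symm_apply]
  have hβ : (D' β).toAdd ≠ 0 := fun h => by
    have hγ₁ : homotopyClass γ = 1 := by
      simpa only [β, EmbeddingLike.map_eq_one_iff] using
        (map_eq_one_iff D' hinjD').1 (Multiplicative.toAdd.injective h)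
    rw [hγ₁, map_one, toAdd_one] at hDγ
    exact zero_ne_one hDγ
  refine ⟨b, γ, w, (D' (piTwoMap ρ b (homotopyClass γ))).toAdd, hinj, hw, ?_,
    hD' ⟨ρ.comp γ.1, fun y hy => congrArg ρ (γ.2 y hy)⟩⟩
  rw [hpush, map_zpow, toAdd_zpow, smul_eq_mul, abs_mul]
  exact le_mul_of_one_le_right (abs_nonneg k) (Int.one_le_abs hβ)

theorem encard_preimage_finset_le {X Y : Type*} (f : X → Y) {P : Finset Y} {n : ℕ∞}
    (h : ∀ y ∈ P, (f ⁻¹' {y}).encard ≤ n) : (f ⁻¹' P).encard ≤ P.card * n := by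
  classical
  induction P using Finset.induction_on with
  | empty => simp
  | insert y P hy ih =>
    rw [Finset.coe_insert, insert_eq, preimage_union, Finset.card_insert_of_notMem hy,
      Nat.cast_succ, add_mul, one_mul, add_comm]
    exact (encard_union_le _ _).trans (add_le_add (h y (Finset.mem_insert_self y P))
      (ih fun z hz => h z (Finset.mem_insert_of_mem hz)))

theorem exists_le_encard_preimage {ρ : C(Sphere2, Sphere2)} {b : Sphere2}
    {γ : GenLoop (Fin 2) Sphere2 b} (hγ : InjOn (square γ) (square γ ⁻¹' {b})ᶜ) {w : ℂ × ℂ}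
    (hw : IsHopfLift w (ρ b)) {d : ℤ} (hd : HasHopfDegree w (ρ ∘ square γ) d) {k : ℕ}
    (hk : (k : ℤ) ≤ |d|) {P : Finset Sphere2} (hP : P.card = 2 * k + 2) (hb : ρ b ∉ P) :
    ∃ p ∈ P, (k : ℕ∞) ≤ (ρ ⁻¹' {p}).encard := by
  by_contra! hsmall
  obtain ⟨n, rfl⟩ : ∃ n, k = n + 1 := by
    obtain ⟨p, hp⟩ : P.Nonempty := Finset.card_pos.1 (by omega)
    exact Nat.exists_eq_succ_of_ne_zero fun hk₀ => by simpa [hk₀] using hsmall p hp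
  have hρP : (ρ ⁻¹' P).encard ≤ ((2 * (n + 1) + 2) * n : ℕ) := by
    have hle := encard_preimage_finset_le ρ (P := P) (n := n) fun p hp =>
      ENat.lt_natCast_add_one_iff.1 (by simpa using hsmall p hp)
    rwa [hP, ← Nat.cast_mul] at hle
  have hinj : InjOn (square γ) (ρ ∘ square γ ⁻¹' P) := by
    refine hγ.mono fun q hq => ?_
    rintro (hqb : square γ q = b)
    exact hb (hqb ▸ hq)
  have hencard : (ρ ∘ square γ ⁻¹' P).encard ≤ ((2 * (n + 1) + 2) * n : ℕ) :=
    (hinj.encard_image.symm.trans_le (encard_le_encard (image_subset_iff.2 subset_rfl))).trans hρP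
  have hfin := finite_of_encard_le_coe hencard
  have hcard : (ρ ∘ square γ ⁻¹' P).ncard ≤ (2 * (n + 1) + 2) * n := by
    rwa [← hfin.cast_ncard_eq, Nat.cast_le] at hencard
  have hbound := hd.abs_mul_le_ncard hw hP hb hfin
  zify at hcard
  push_cast at hbound hk
  nlinarith

end SmallFibers

/-- If `ρ : S² → S²` is a continuous map of degree `k ≥ 1`, then the set of points
`p ∈ S²` whose fiber `ρ⁻¹(p)` has fewer than `k` elements is finite. -/
theorem finite_small_fibers (ρ : C(Sphere2, Sphere2)) (k : ℕ)
    (hk : 1 ≤ k) (hdeg : HasDegree ρ (k : ℤ)) :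
    {p : Sphere2 | (ρ ⁻¹' {p}).encard < (k : ℕ∞)}.Finite := by
  obtain ⟨b, γ, w, d, hγ, hw, hkd, hd⟩ := SmallFibers.exists_hasHopfDegree_comp hdeg
  by_contra hinf
  obtain ⟨P, hPsub, hPcard⟩ :=
    (Set.Infinite.sdiff hinf (Set.finite_singleton (ρ b))).exists_subset_card_eq (2 * k + 2)
  obtain ⟨p, hp, hle⟩ := SmallFibers.exists_le_encard_preimage hγ hw hd (by simpa using hkd) hPcard
    fun hb => (hPsub hb).2 rfl
  exact (hPsub hp).1.not_ge hle
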